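/- arXiv:1009.3573 — 2 statements merged into one kernel-verified Lean document; each statement's English description precedes it below -/
import Mathlib

section
/- Let φ_j, φ_k : ℝⁿ → ℝ be smooth ℤⁿ-periodic eigenfunctions with the same eigenvalue: Δφ_j = −λ²φ_j and Δφ_k = −λ²φ_k for some λ > 0. Then ∫_{N_{φ_j}} |φ_k(x)| ‖∇φ_j(x)‖ dμH^{n−1}(x) = ∫_{N_{φ_k}} |φ_j(x)| ‖∇φ_k(x)‖ dμH^{n−1}(x). -/
/-!
For `C²` functions `f`, `g` on a flat torus with fundamental domain `Q`, the Gauss-Green formula on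
`{f > 0}` and `{f < 0}` gives
`∫_{Q ∩ {f = 0}} |g| ‖∇f‖ dμH = -1/2 ∫_Q sgn f · sgn g · div (g ∇f) dx`,
and the right-hand side is symmetric as soon as `div (g ∇f) - div (f ∇g) = g Δf - f Δg` vanishes.

No regularity of the nodal set is used. First,
`∫_{f = 0} ψ ‖∇f‖ dμH = -1/2 ∫ sgn f · div (ψ ∇f) dx`
for every test function `ψ` on the whole space:

* The right-hand side is monotone in the field `ψ ∇f`, because `-∫ sgn f · div u ≥ 0` whenever
  `⟪u, ∇f⟫ ≥ 0`. Near a regular point `∇f` is almost a constant multiple of a unit vector `e`, and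
  `-1/2 ∫ sgn f ∂ₑψ` is evaluated on the lines parallel to `e`, each of which meets the nodal set
  at most once, while the projection along `e` is almost an isometry on the nodal set.
* A partition of unity makes the relative errors of these comparisons arbitrarily small, and a
  cutoff in `‖∇f‖²` removes the critical points.

The weights `ψ = χ √(g² + τ²)` then give the weight `χ |g|` in the limit `τ → 0`. If the lattice
translates of `χ` sum to `1`, the integrals over the whole space unfold to integrals over `Q`.
-/

open MeasureTheory Real Set

noncomputable section

/-- The Euclidean Laplacian `Δφ = Σᵢ ∂²φ/∂xᵢ²`. -/
def lap {n : ℕ} (φ : EuclideanSpace ℝ (Fin n) → ℝ) (x : EuclideanSpace ℝ (Fin n)) : ℝ :=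
  ∑ i : Fin n,
    fderiv ℝ (fun y => fderiv ℝ φ y (EuclideanSpace.single i 1)) x (EuclideanSpace.single i 1)

/-- `ℤⁿ`-periodicity of a function on `ℝⁿ`. -/
def ZPeriodic {n : ℕ} (φ : EuclideanSpace ℝ (Fin n) → ℝ) : Prop :=
  ∀ (x : EuclideanSpace ℝ (Fin n)) (k : Fin n → ℤ),
    φ (x + (WithLp.equiv 2 (Fin n → ℝ)).symm fun i => (k i : ℝ)) = φ x

/-- The fundamental domain `Q = [0,1)ⁿ`. -/
def Qcube (n : ℕ) : Set (EuclideanSpace ℝ (Fin n)) :=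
  {x | ∀ i, x i ∈ Set.Ico (0 : ℝ) 1}

open Filter Topology
open scoped ENNReal NNReal Gradient

section Sign

lemma measurable_sign : Measurable Real.sign :=
  Measurable.ite measurableSet_Iio measurable_const
    (Measurable.ite measurableSet_Ioi measurable_const measurable_const)

lemma abs_sign_le_one (t : ℝ) : |Real.sign t| ≤ 1 := by
  rcases Real.sign_apply_eq t with h | h | h <;> simp [h]

lemma sign_mul_self_eq_abs (t : ℝ) : Real.sign t * t = |t| := by
  rcases lt_trichotomy t 0 with h | rfl | h
  · rw [Real.sign_of_neg h, abs_of_neg h, neg_one_mul]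
  · simp
  · rw [Real.sign_of_pos h, abs_of_pos h, one_mul]

lemma integrable_sign_mul {X : Type*} [MeasurableSpace X] {μ : Measure X} {f g : X → ℝ}
    (hf : Measurable f) (hg : Integrable g μ) :
    Integrable (fun x => Real.sign (f x) * g x) μ :=
  hg.bdd_mul (c := 1) (measurable_sign.comp hf).aestronglyMeasurable
    (Eventually.of_forall fun x => abs_sign_le_one (f x))

end Sign

/-- A regularization of the absolute value, smooth for `τ ≠ 0`. -/
def smoothAbs (τ t : ℝ) : ℝ := √(t ^ 2 + τ ^ 2)

/-- The derivative of `smoothAbs τ`, a regularization of the sign function. -/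
def smoothSign (τ t : ℝ) : ℝ := t / smoothAbs τ t

section Regularization

variable {τ : ℝ} (t : ℝ)

lemma smoothAbs_nonneg (τ t : ℝ) : 0 ≤ smoothAbs τ t := Real.sqrt_nonneg _

lemma smoothAbs_pos (hτ : τ ≠ 0) : 0 < smoothAbs τ t := Real.sqrt_pos.2 (by positivity)

lemma smoothAbs_zero_left : smoothAbs 0 t = |t| := by
  rw [smoothAbs, zero_pow two_ne_zero, add_zero, Real.sqrt_sq_eq_abs]

lemma abs_le_smoothAbs (τ t : ℝ) : |t| ≤ smoothAbs τ t :=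
  Real.abs_le_sqrt (le_add_of_nonneg_right (sq_nonneg τ))

lemma eventually_smoothAbs_le_smoothAbs_one :
    ∀ᶠ τ in 𝓝[≠] 0, ∀ t, smoothAbs τ t ≤ smoothAbs 1 t := by
  have hsq : Tendsto (fun τ : ℝ => τ ^ 2) (𝓝[≠] 0) (𝓝 0) :=
    ((continuous_pow 2).tendsto' 0 0 (zero_pow two_ne_zero)).mono_left nhdsWithin_le_nhds
  filter_upwards [hsq.eventually_le_const one_pos] with τ hτ t
  exact Real.sqrt_le_sqrt (by linarith)

lemma abs_smoothSign_le_one (τ t : ℝ) : |smoothSign τ t| ≤ 1 := by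
  rw [smoothSign, abs_div, abs_of_nonneg (smoothAbs_nonneg τ t)]
  exact div_le_one_of_le₀ (abs_le_smoothAbs τ t) (smoothAbs_nonneg τ t)

lemma contDiff_smoothAbs (hτ : τ ≠ 0) {k : WithTop ℕ∞} : ContDiff ℝ k (smoothAbs τ) :=
  ((contDiff_id.pow 2).add contDiff_const).sqrt fun t => by positivity

lemma contDiff_smoothSign (hτ : τ ≠ 0) {k : WithTop ℕ∞} : ContDiff ℝ k (smoothSign τ) :=
  contDiff_id.div (contDiff_smoothAbs hτ) fun t => (smoothAbs_pos t hτ).ne'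

lemma hasDerivAt_smoothAbs (hτ : τ ≠ 0) : HasDerivAt (smoothAbs τ) (smoothSign τ t) t := by
  have hsq : HasDerivAt (fun t : ℝ => t ^ 2 + τ ^ 2) (2 * t) t := by
    simpa using (hasDerivAt_pow 2 t).add_const (τ ^ 2)
  have hsqrt := hsq.sqrt (by positivity)
  rwa [mul_div_mul_left _ _ two_ne_zero] at hsqrt

lemma deriv_smoothSign_nonneg (hτ : τ ≠ 0) : 0 ≤ deriv (smoothSign τ) t := by
  have hpos := smoothAbs_pos t hτ
  have hquot : HasDerivAt (smoothSign τ)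
      ((1 * smoothAbs τ t - t * smoothSign τ t) / smoothAbs τ t ^ 2) t :=
    (hasDerivAt_id t).div (hasDerivAt_smoothAbs t hτ) hpos.ne'
  rw [hquot.deriv]
  refine div_nonneg ?_ (sq_nonneg _)
  calc (0 : ℝ) ≤ |t| - |t| * |smoothSign τ t| :=
        sub_nonneg.2 (mul_le_of_le_one_right (abs_nonneg t) (abs_smoothSign_le_one τ t))
    _ ≤ 1 * smoothAbs τ t - t * smoothSign τ t := by
        rw [one_mul, ← abs_mul]
        exact sub_le_sub (abs_le_smoothAbs τ t) (le_abs_self _)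

lemma continuous_smoothAbs_left : Continuous fun τ => smoothAbs τ t := by
  unfold smoothAbs; fun_prop

lemma tendsto_smoothAbs : Tendsto (fun τ => smoothAbs τ t) (𝓝 0) (𝓝 |t|) := by
  simpa only [smoothAbs_zero_left] using (continuous_smoothAbs_left t).tendsto 0

lemma tendsto_smoothSign : Tendsto (fun τ => smoothSign τ t) (𝓝 0) (𝓝 (Real.sign t)) := by
  rcases eq_or_ne t 0 with rfl | ht
  · simp [smoothSign]
  · have hsign : Real.sign t = t / |t| := by
      rw [← sign_mul_self_eq_abs, div_mul_cancel_right₀ ht, Real.inv_sign]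
    rw [hsign]
    exact tendsto_const_nhds.div (tendsto_smoothAbs t) (abs_ne_zero.2 ht)

end Regularization

section Divergence

variable {E : Type*} [NormedAddCommGroup E] [NormedSpace ℝ E]

/-- The divergence of a vector field, as the trace of its derivative; junk where `u` is not
differentiable. -/
def divergence (u : E → E) (x : E) : ℝ := LinearMap.trace ℝ E (fderiv ℝ u x)

lemma divergence_eq_deriv (u : ℝ → ℝ) (t : ℝ) : divergence u t = deriv u t := by
  have htrace := LinearMap.trace_smulRight (fderiv ℝ u t : ℝ →ₗ[ℝ] ℝ) (1 : ℝ)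
  rw [← fderiv_apply_one_eq_deriv, divergence, ← ContinuousLinearMap.coe_coe, ← htrace]
  congr 1
  ext; simp

lemma divergence_of_notMem_tsupport {u : E → E} {x : E} (hx : x ∉ tsupport u) :
    divergence u x = 0 := by
  rw [divergence, fderiv_of_notMem_tsupport ℝ hx, ContinuousLinearMap.toLinearMap_zero, map_zero]

lemma hasCompactSupport_divergence {u : E → E} (hu : HasCompactSupport u) :
    HasCompactSupport (divergence u) :=
  HasCompactSupport.intro hu fun _ => divergence_of_notMem_tsupport

lemma divergence_comp_add_left (u : E → E) (a x : E) :
    divergence (fun y => u (a + y)) x = divergence u (a + x) := by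
  rw [divergence, fderiv_comp_add_left, divergence]

lemma divergence_sub {u v : E → E} {x : E} (hu : DifferentiableAt ℝ u x)
    (hv : DifferentiableAt ℝ v x) :
    divergence (fun y => u y - v y) x = divergence u x - divergence v x := by
  rw [divergence, fderiv_fun_sub hu hv, ContinuousLinearMap.toLinearMap_sub, map_sub, divergence,
    divergence]

lemma divergence_sum {ι : Type*} {s : Finset ι} {u : ι → E → E} {x : E}
    (hu : ∀ i ∈ s, DifferentiableAt ℝ (u i) x) :
    divergence (fun y => ∑ i ∈ s, u i y) x = ∑ i ∈ s, divergence (u i) x := by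
  simp only [divergence, fderiv_fun_sum hu, ContinuousLinearMap.toLinearMap_sum, map_sum]

variable [FiniteDimensional ℝ E]

lemma divergence_smul {ψ : E → ℝ} {u : E → E} {x : E} (hψ : DifferentiableAt ℝ ψ x)
    (hu : DifferentiableAt ℝ u x) :
    divergence (fun y => ψ y • u y) x = ψ x * divergence u x + fderiv ℝ ψ x (u x) := by
  have htrace := LinearMap.trace_smulRight (fderiv ℝ ψ x : E →ₗ[ℝ] ℝ) (u x)
  rw [divergence, fderiv_fun_smul hψ hu, ContinuousLinearMap.toLinearMap_add, map_add,
    ContinuousLinearMap.toLinearMap_smul, map_smul, smul_eq_mul, divergence]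
  exact congrArg _ htrace

lemma divergence_smul_const {ψ : E → ℝ} {x : E} (hψ : DifferentiableAt ℝ ψ x) (e : E) :
    divergence (fun y => ψ y • e) x = fderiv ℝ ψ x e := by
  rw [divergence_smul hψ (differentiableAt_const e)]
  simp [divergence]

lemma continuous_divergence {u : E → E} (hu : ContDiff ℝ 1 u) : Continuous (divergence u) :=
  (LinearMap.continuous_of_finiteDimensional
    (LinearMap.trace ℝ E ∘ₗ ContinuousLinearMap.coeLM ℝ)).comp (hu.continuous_fderiv one_ne_zero)

end Divergence

section Integration

variable {E : Type*} [NormedAddCommGroup E] [InnerProductSpace ℝ E] [FiniteDimensional ℝ E]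
  [MeasurableSpace E] [BorelSpace E]

lemma integrable_divergence {u : E → E} (hu : ContDiff ℝ 1 u) (huc : HasCompactSupport u) :
    Integrable (divergence u) :=
  (continuous_divergence hu).integrable_of_hasCompactSupport (hasCompactSupport_divergence huc)

lemma integrable_fderiv_apply {F : Type*} [NormedAddCommGroup F] [NormedSpace ℝ F] {u : E → F}
    (hu : ContDiff ℝ 1 u) (huc : HasCompactSupport u) (v : E) :
    Integrable fun x => fderiv ℝ u x v :=
  ((hu.continuous_fderiv one_ne_zero).clm_apply continuous_const).integrable_of_hasCompactSupport
    (huc.fderiv_apply (𝕜 := ℝ) v)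

lemma integral_fderiv_apply_eq_zero {F : Type*} [NormedAddCommGroup F] [NormedSpace ℝ F]
    {u : E → F} (hu : ContDiff ℝ 1 u) (huc : HasCompactSupport u) (v : E) :
    ∫ x, fderiv ℝ u x v = 0 := by
  simpa using integral_smul_fderiv_eq_neg_fderiv_smul_of_integrable (𝕜 := ℝ) (f := fun _ => 1)
    (g := u) (v := v) (μ := volume) (by simp) (by simpa using integrable_fderiv_apply hu huc v)
    (by simpa using hu.continuous.integrable_of_hasCompactSupport huc)
    (fun _ _ => differentiableAt_const _) fun x _ => hu.differentiable one_ne_zero x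

lemma integral_divergence_eq_zero {u : E → E} (hu : ContDiff ℝ 1 u) (huc : HasCompactSupport u) :
    ∫ x, divergence u x = 0 := by
  let b := stdOrthonormalBasis ℝ E
  have hint (v : E) := integrable_fderiv_apply hu huc v
  calc ∫ x, divergence u x = ∫ x, ∑ i, inner ℝ (b i) (fderiv ℝ u x (b i)) :=
        integral_congr_ae (Eventually.of_forall fun x => LinearMap.trace_eq_sum_inner _ b)
    _ = ∑ i, inner ℝ (b i) (∫ x, fderiv ℝ u x (b i)) := by
        rw [integral_finsetSum _ fun i _ => (hint (b i)).const_inner (b i)]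
        exact Finset.sum_congr rfl fun i _ => integral_inner (hint (b i)) (b i)
    _ = 0 := by simp only [integral_fderiv_apply_eq_zero hu huc, inner_zero_right,
        Finset.sum_const_zero]

lemma integral_mul_divergence {h : E → ℝ} {u : E → E} (hh : ContDiff ℝ 1 h) (hu : ContDiff ℝ 1 u)
    (huc : HasCompactSupport u) :
    ∫ x, h x * divergence u x = -∫ x, fderiv ℝ h x (u x) := by
  have hmul : Integrable fun x => h x * divergence u x :=
    (hh.continuous.mul (continuous_divergence hu)).integrable_of_hasCompactSupport
      (hasCompactSupport_divergence huc).mul_left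
  have hderiv : Integrable fun x => fderiv ℝ h x (u x) :=
    ((hh.continuous_fderiv one_ne_zero).clm_apply hu.continuous).integrable_of_hasCompactSupport
      (huc.mono fun x hx => by contrapose! hx; simp_all)
  rw [eq_neg_iff_add_eq_zero, ← integral_add hmul hderiv,
    ← integral_divergence_eq_zero (hh.smul hu) huc.smul_left]
  exact integral_congr_ae (Eventually.of_forall fun x => (divergence_smul
    (hh.differentiable one_ne_zero x) (hu.differentiable one_ne_zero x)).symm)

/-- The flux `∫_{f = 0} ⟪u, ∇f⟫ / ‖∇f‖` of `u` through the nodal set, rewritten by the divergence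
theorem on `{f > 0}` and `{f < 0}` so as to make sense without any regularity of the nodal set. -/
def nodalFlux (f : E → ℝ) (u : E → E) : ℝ := -(1 / 2) * ∫ x, Real.sign (f x) * divergence u x

variable {f : E → ℝ} {u v : E → E}

lemma nodalFlux_sub (hf : Continuous f) (hu : ContDiff ℝ 1 u) (huc : HasCompactSupport u)
    (hv : ContDiff ℝ 1 v) (hvc : HasCompactSupport v) :
    nodalFlux f (fun x => u x - v x) = nodalFlux f u - nodalFlux f v := by
  have hdiff {w : E → E} (hw : ContDiff ℝ 1 w) (x : E) := hw.differentiable one_ne_zero x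
  simp only [nodalFlux, divergence_sub (hdiff hu _) (hdiff hv _), mul_sub]
  rw [integral_sub (integrable_sign_mul hf.measurable (integrable_divergence hu huc))
    (integrable_sign_mul hf.measurable (integrable_divergence hv hvc)), mul_sub]

lemma nodalFlux_const_smul (hu : ContDiff ℝ 1 u) (c : ℝ) :
    nodalFlux f (fun x => c • u x) = c * nodalFlux f u := by
  have hdiv (x : E) : divergence (fun y => c • u y) x = c * divergence u x := by
    rw [divergence_smul (differentiableAt_const c) (hu.differentiable one_ne_zero x)]
    simp
  simp only [nodalFlux, hdiv, mul_left_comm _ c, integral_const_mul]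

lemma nodalFlux_sum {ι : Type*} {s : Finset ι} {u : ι → E → E} (hf : Continuous f)
    (hu : ∀ i, ContDiff ℝ 1 (u i)) (huc : ∀ i, HasCompactSupport (u i)) :
    nodalFlux f (fun x => ∑ i ∈ s, u i x) = ∑ i ∈ s, nodalFlux f (u i) := by
  have hdiv (x : E) : divergence (fun y => ∑ i ∈ s, u i y) x = ∑ i ∈ s, divergence (u i) x :=
    divergence_sum fun i _ => (hu i).differentiable one_ne_zero x
  simp only [nodalFlux, hdiv, Finset.mul_sum]
  rw [integral_finsetSum _ fun i _ =>
    integrable_sign_mul hf.measurable (integrable_divergence (hu i) (huc i)), Finset.mul_sum]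

lemma tendsto_integral_smoothSign_mul {g : E → ℝ} (hf : Continuous f) (hg : Integrable g) :
    Tendsto (fun τ => ∫ x, smoothSign τ (f x) * g x) (𝓝[≠] 0)
      (𝓝 (∫ x, Real.sign (f x) * g x)) := by
  refine tendsto_integral_filter_of_dominated_convergence (fun x => |g x|) ?_ ?_ hg.norm ?_
  · filter_upwards [self_mem_nhdsWithin] with τ hτ
    exact ((contDiff_smoothSign (k := 0) hτ).continuous.comp hf).aestronglyMeasurable.mul
      hg.aestronglyMeasurable
  · refine Eventually.of_forall fun τ => Eventually.of_forall fun x => ?_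
    rw [Real.norm_eq_abs, abs_mul]
    exact mul_le_of_le_one_left (abs_nonneg _) (abs_smoothSign_le_one τ (f x))
  · exact Eventually.of_forall fun x =>
      ((tendsto_smoothSign (f x)).mono_left nhdsWithin_le_nhds).mul_const _

lemma nodalFlux_nonneg (hf : ContDiff ℝ 1 f) (hu : ContDiff ℝ 1 u) (huc : HasCompactSupport u)
    (hpos : ∀ x, 0 ≤ fderiv ℝ f x (u x)) : 0 ≤ nodalFlux f u := by
  refine mul_nonneg_of_nonpos_of_nonpos (by norm_num) ?_
  refine le_of_tendsto
    (tendsto_integral_smoothSign_mul hf.continuous (integrable_divergence hu huc)) ?_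
  filter_upwards [self_mem_nhdsWithin] with τ (hτ : τ ≠ 0)
  have hsmooth : ContDiff ℝ 1 (smoothSign τ) := contDiff_smoothSign hτ
  change ∫ x, (smoothSign τ ∘ f) x * divergence u x ≤ 0
  rw [integral_mul_divergence (hsmooth.comp hf) hu huc, neg_nonpos]
  refine integral_nonneg fun x => ?_
  have hchain : HasFDerivAt (smoothSign τ ∘ f) (deriv (smoothSign τ) (f x) • fderiv ℝ f x) x :=
    (hsmooth.differentiable one_ne_zero (f x)).hasDerivAt.comp_hasFDerivAt x
      (hf.differentiable one_ne_zero x).hasFDerivAt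
  rw [hchain.fderiv]
  exact mul_nonneg (deriv_smoothSign_nonneg (f x) hτ) (hpos x)

lemma nodalFlux_mono (hf : ContDiff ℝ 1 f) (hu : ContDiff ℝ 1 u) (huc : HasCompactSupport u)
    (hv : ContDiff ℝ 1 v) (hvc : HasCompactSupport v)
    (huv : ∀ x, fderiv ℝ f x (u x) ≤ fderiv ℝ f x (v x)) : nodalFlux f u ≤ nodalFlux f v := by
  rw [← sub_nonneg, ← nodalFlux_sub hf.continuous hv hvc hu huc]
  exact nodalFlux_nonneg hf (hv.sub hu) (hvc.sub huc) fun x => by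
    rw [map_sub]; exact sub_nonneg.2 (huv x)

end Integration

section Lines

variable {E : Type*} [NormedAddCommGroup E] [InnerProductSpace ℝ E] {ψ : E → ℝ} {e : E}

/-- The flux along the line `y + ℝ e`: a sum of values of `ψ` at the zeros of `f` on that line. -/
def lineFlux (f ψ : E → ℝ) (e y : E) : ℝ :=
  nodalFlux (fun t : ℝ => f (t • e + y)) fun t => ψ (t • e + y)

lemma contDiff_comp_line (hψ : ContDiff ℝ 1 ψ) (e y : E) :
    ContDiff ℝ 1 fun t : ℝ => ψ (t • e + y) :=
  hψ.comp ((contDiff_id.smul contDiff_const).add contDiff_const)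

lemma hasCompactSupport_comp_line (hψ : HasCompactSupport ψ) (he : ‖e‖ = 1) (y : E) :
    HasCompactSupport fun t : ℝ => ψ (t • e + y) := by
  have hline : Isometry fun t : ℝ => t • e + y := Isometry.of_dist_eq fun s t => by
    rw [dist_add_right, dist_eq_norm, ← sub_smul, norm_smul, he, mul_one, dist_eq_norm]
  exact hψ.comp_isClosedEmbedding hline.isClosedEmbedding

lemma divergence_comp_line [FiniteDimensional ℝ E] (hψ : ContDiff ℝ 1 ψ) (e y : E) (t : ℝ) :
    divergence (fun t : ℝ => ψ (t • e + y)) t = divergence (fun x => ψ x • e) (t • e + y) := by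
  have hline : HasDerivAt (fun t : ℝ => t • e + y) e t := by
    simpa using ((hasDerivAt_id t).smul_const e).add_const y
  have hdiff := hψ.differentiable one_ne_zero
  rw [divergence_eq_deriv, divergence_smul_const (hdiff _)]
  exact ((hdiff _).hasFDerivAt.comp_hasDerivAt t hline).deriv

variable [FiniteDimensional ℝ E] [MeasurableSpace E] [BorelSpace E]

lemma nodalFlux_eq_zero_of_ne_zero {f : E → ℝ} {u : E → E} {s : Set E} (hf : ContinuousOn f s)
    (hu : ContDiff ℝ 1 u) (huc : HasCompactSupport u) (hs : IsPreconnected s)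
    (hus : tsupport u ⊆ s) (hne : ∀ x ∈ s, f x ≠ 0) : nodalFlux f u = 0 := by
  obtain ⟨c, hc⟩ : ∃ c : ℝ, ∀ x ∈ s, Real.sign (f x) = c := by
    by_cases hpos : ∃ x ∈ s, 0 < f x
    · obtain ⟨x, hx, hfx⟩ := hpos
      refine ⟨1, fun y hy => Real.sign_of_pos ?_⟩
      by_contra! hfy
      obtain ⟨z, hz, hfz⟩ := hs.intermediate_value hy hx hf ⟨hfy, hfx.le⟩
      exact hne z hz hfz
    · push Not at hpos
      exact ⟨-1, fun y hy => Real.sign_of_neg ((hpos y hy).lt_of_ne (hne y hy))⟩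
  have hconst (x : E) : Real.sign (f x) * divergence u x = c * divergence u x := by
    by_cases hx : x ∈ s
    · rw [hc x hx]
    · rw [divergence_of_notMem_tsupport fun h => hx (hus h), mul_zero, mul_zero]
  simp only [nodalFlux, hconst, integral_const_mul, integral_divergence_eq_zero hu huc, mul_zero]

lemma nodalFlux_eq_of_strictMonoOn {h u : ℝ → ℝ} {s : Set ℝ} (hh : Measurable h)
    (hu : ContDiff ℝ 1 u) (huc : HasCompactSupport u) (hus : tsupport u ⊆ s)
    (hmono : StrictMonoOn h s) {t₀ : ℝ} (ht₀ : t₀ ∈ s) (hzero : h t₀ = 0) :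
    nodalFlux h u = u t₀ := by
  have hint := integrable_sign_mul hh (integrable_divergence hu huc)
  have hleft : ∫ t in Iio t₀, Real.sign (h t) * divergence u t = -u t₀ := by
    rw [← huc.integral_Iic_deriv_eq hu t₀, integral_Iic_eq_integral_Iio, ← integral_neg]
    refine setIntegral_congr_fun measurableSet_Iio fun t (ht : t < t₀) => ?_
    by_cases hts : t ∈ s
    · simp [Real.sign_of_neg (hzero ▸ hmono hts ht₀ ht), divergence_eq_deriv]
    · simp [← divergence_eq_deriv, divergence_of_notMem_tsupport fun h => hts (hus h)]
  have hright : ∫ t in Ioi t₀, Real.sign (h t) * divergence u t = -u t₀ := by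
    rw [← huc.integral_Ioi_deriv_eq hu t₀]
    refine setIntegral_congr_fun measurableSet_Ioi fun t (ht : t₀ < t) => ?_
    by_cases hts : t ∈ s
    · simp [Real.sign_of_pos (hzero ▸ hmono ht₀ hts ht), divergence_eq_deriv]
    · simp [← divergence_eq_deriv, divergence_of_notMem_tsupport fun h => hts (hus h)]
  rw [nodalFlux, ← intervalIntegral.integral_Iic_add_Ioi (b := t₀) hint.integrableOn
    hint.integrableOn, integral_Iic_eq_integral_Iio, hleft, hright]
  ring

/-- The decomposition of the space into a line spanned by a unit vector and its orthogonal
complement, used to integrate over the lines parallel to `e`. -/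
def lineProdOrthogonal (e : E) (he : ‖e‖ = 1) : ℝ × (ℝ ∙ e)ᗮ ≃ᵐ E :=
  ((LinearIsometryEquiv.toSpanUnitSingleton e he).toMeasurableEquiv.prodCongr (.refl _)).trans
    ((ℝ ∙ e).measurableEquivProd (0 : E)).symm

lemma lineProdOrthogonal_apply (he : ‖e‖ = 1) (z : ℝ × (ℝ ∙ e)ᗮ) :
    lineProdOrthogonal e he z = z.1 • e + z.2 := by
  change ((ℝ ∙ e).measurableEquivProd (0 : E)).symm
    (LinearIsometryEquiv.toSpanUnitSingleton e he z.1, z.2) = _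
  rw [Submodule.measurableEquivProd_symm_apply, vadd_eq_add, add_zero,
    LinearIsometryEquiv.toSpanUnitSingleton_apply]

lemma measurePreserving_lineProdOrthogonal (he : ‖e‖ = 1) :
    MeasurePreserving (lineProdOrthogonal e he) := by
  have hsplit := (ℝ ∙ e).measurePreserving_measurableEquivProd (0 : E)
  rw [InnerProductSpace.euclideanHausdorffMeasure_eq_volume] at hsplit
  have hprod : MeasurePreserving (Prod.map (LinearIsometryEquiv.toSpanUnitSingleton (𝕜 := ℝ) e he)
      (id : (ℝ ∙ e)ᗮ → (ℝ ∙ e)ᗮ)) (volume.prod volume) (volume.prod volume) :=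
    (LinearIsometryEquiv.measurePreserving _).prod (.id volume)
  exact (hsplit.symm _).comp hprod

section Slices

variable {f : E → ℝ} (hf : Continuous f) (hψ : ContDiff ℝ 1 ψ) (hψc : HasCompactSupport ψ)
  (he : ‖e‖ = 1)

include hf hψ hψc he in
lemma integrable_sign_mul_divergence_line :
    Integrable fun z : ℝ × (ℝ ∙ e)ᗮ =>
      Real.sign (f (z.1 • e + z.2)) * divergence (fun x => ψ x • e) (z.1 • e + z.2) := by
  have hint : Integrable fun x => Real.sign (f x) * divergence (fun x => ψ x • e) x :=
    integrable_sign_mul hf.measurable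
      (integrable_divergence (hψ.smul contDiff_const) hψc.smul_right)
  simpa only [Function.comp_def, lineProdOrthogonal_apply] using
    (measurePreserving_lineProdOrthogonal he).integrable_comp_of_integrable hint

include hf hψ hψc he in
lemma integrable_lineFlux : Integrable fun y : (ℝ ∙ e)ᗮ => lineFlux f ψ e y := by
  simp only [lineFlux, nodalFlux, divergence_comp_line hψ]
  exact (integrable_sign_mul_divergence_line hf hψ hψc he).integral_prod_right.const_mul _

include hf hψ hψc he in
lemma nodalFlux_smul_const_eq_integral :
    nodalFlux f (fun x => ψ x • e) = ∫ y : (ℝ ∙ e)ᗮ, lineFlux f ψ e y := by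
  simp only [lineFlux, nodalFlux, integral_const_mul, divergence_comp_line hψ]
  rw [← integral_prod_symm _ (integrable_sign_mul_divergence_line hf hψ hψc he),
    ← (measurePreserving_lineProdOrthogonal he).integral_comp']
  simp only [lineProdOrthogonal_apply, Measure.volume_eq_prod]

end Slices

end Lines

section Hausdorff

variable {X Y : Type*} [EMetricSpace X] [MeasurableSpace X] [BorelSpace X] [EMetricSpace Y]
  [MeasurableSpace Y] [BorelSpace Y] {P : X → Y}

lemma hausdorff_restrict_image_le_map (hP : LipschitzWith 1 P) (M : Set X) (d : ℕ) :
    (μHE[d] : Measure Y).restrict (P '' M) ≤ ((μHE[d] : Measure X).restrict M).map P := by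
  refine Measure.le_iff.2 fun B hB => ?_
  have hPm : Measurable P := hP.continuous.measurable
  rw [Measure.restrict_apply hB, Measure.map_apply hPm hB, Measure.restrict_apply (hPm hB),
    inter_comm, ← image_inter_preimage, inter_comm]
  simp only [Measure.euclideanHausdorffMeasure_def, Measure.smul_apply]
  gcongr
  simpa using hP.hausdorffMeasure_image_le (d := d) d.cast_nonneg (P ⁻¹' B ∩ M)

lemma map_hausdorff_restrict_le {K : ℝ≥0} {M : Set X} (hP : Measurable P)
    (hK : AntilipschitzWith K (M.domRestrict P)) (d : ℕ) :
    ((μHE[d] : Measure X).restrict M).map P ≤ (K : ℝ≥0∞) ^ d • (μHE[d] : Measure Y) := by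
  refine Measure.le_iff.2 fun B hB => ?_
  have hsub : P ⁻¹' B ∩ M = (↑) '' (M.domRestrict P ⁻¹' B) := by
    ext x; simp [and_comm, Set.domRestrict_apply]
  rw [Measure.map_apply hP hB, Measure.restrict_apply (hP hB), hsub]
  simp only [Measure.euclideanHausdorffMeasure_def, Measure.smul_apply]
  rw [isometry_subtype_coe.hausdorffMeasure_image (.inl d.cast_nonneg), smul_comm]
  gcongr
  simpa using hK.hausdorffMeasure_preimage_le (d := d) d.cast_nonneg B

end Hausdorff

/-- On `s`, the gradient of `f` is within relative error `1 - 1 / θ` of the constant vector `a • e`,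
whose direction `e` is normalised. -/
structure IsNearlyLinearOn {E : Type*} [NormedAddCommGroup E] [InnerProductSpace ℝ E]
    [CompleteSpace E] (f : E → ℝ) (s : Set E) (e : E) (a : ℝ) (θ : ℝ≥0) : Prop where
  norm_eq_one : ‖e‖ = 1
  pos : 0 < a
  one_le : 1 ≤ θ
  norm_gradient_sub_le : ∀ x ∈ s, ‖∇ f x - a • e‖ ≤ (1 - (θ : ℝ)⁻¹) * a

/-- The weights against which the area of a nodal set is tested. -/
structure IsTestFunction {E : Type*} [NormedAddCommGroup E] [NormedSpace ℝ E] (ψ : E → ℝ) :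
    Prop where
  contDiff : ContDiff ℝ 1 ψ
  hasCompactSupport : HasCompactSupport ψ
  nonneg : ∀ x, 0 ≤ ψ x

lemma IsTestFunction.contDiff_smul_const {E : Type*} [NormedAddCommGroup E]
    [NormedSpace ℝ E] {ψ : E → ℝ} (hψ : IsTestFunction ψ) (e : E) :
    ContDiff ℝ 1 fun x => ψ x • e :=
  hψ.contDiff.smul contDiff_const

namespace IsNearlyLinearOn

section Gradient

variable {E : Type*} [NormedAddCommGroup E] [InnerProductSpace ℝ E] [CompleteSpace E]
  {f : E → ℝ} {s : Set E} {e : E} {a : ℝ} {θ : ℝ≥0}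

lemma theta_pos (h : IsNearlyLinearOn f s e a θ) : 0 < (θ : ℝ) :=
  NNReal.coe_pos.2 (one_pos.trans_le h.one_le)

lemma norm_smul_eq (h : IsNearlyLinearOn f s e a θ) : ‖a • e‖ = a := by
  rw [norm_smul, h.norm_eq_one, mul_one, Real.norm_of_nonneg h.pos.le]

lemma le_norm_gradient (h : IsNearlyLinearOn f s e a θ) {x : E} (hx : x ∈ s) :
    a ≤ θ * ‖∇ f x‖ := by
  have hnorm := h.norm_smul_eq
  have hsub := (norm_sub_norm_le (a • e) (∇ f x)).trans
    ((norm_sub_rev _ _).trans_le (h.norm_gradient_sub_le x hx))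
  rw [← inv_mul_le_iff₀ h.theta_pos]
  linarith

lemma two_sub_inv_le (h : IsNearlyLinearOn f s e a θ) : 2 - (θ : ℝ)⁻¹ ≤ θ := by
  have hθ := h.theta_pos
  rw [sub_le_iff_le_add, ← sub_nonneg]
  have hsq : (θ : ℝ) + (θ : ℝ)⁻¹ - 2 = (θ - 1) ^ 2 / θ := by field_simp; ring
  rw [hsq]
  positivity

lemma norm_gradient_le (h : IsNearlyLinearOn f s e a θ) {x : E} (hx : x ∈ s) :
    ‖∇ f x‖ ≤ θ * a := by
  have hnorm := h.norm_smul_eq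
  have hsub := (norm_sub_norm_le (∇ f x) (a • e)).trans (h.norm_gradient_sub_le x hx)
  have hθ := mul_le_mul_of_nonneg_right h.two_sub_inv_le h.pos.le
  linarith

lemma le_fderiv_apply (h : IsNearlyLinearOn f s e a θ) {x : E} (hx : x ∈ s) :
    a ≤ θ * fderiv ℝ f x e := by
  have hinner : a - fderiv ℝ f x e = -inner ℝ (∇ f x - a • e) e := by
    rw [inner_sub_left, inner_gradient_left, real_inner_smul_left, real_inner_self_eq_norm_sq,
      h.norm_eq_one]
    ring
  have hbound : -inner ℝ (∇ f x - a • e) e ≤ (1 - (θ : ℝ)⁻¹) * a := by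
    simpa [h.norm_eq_one] using
      (neg_le_abs _).trans ((abs_real_inner_le_norm _ e).trans
        (mul_le_mul_of_nonneg_right (h.norm_gradient_sub_le x hx) (norm_nonneg e)))
  rw [← inv_mul_le_iff₀ h.theta_pos]
  linarith

lemma fderiv_apply_le (h : IsNearlyLinearOn f s e a θ) {x : E} (hx : x ∈ s) :
    fderiv ℝ f x e ≤ θ * a := by
  rw [← inner_gradient_left]
  simpa [h.norm_eq_one] using
    (real_inner_le_norm (∇ f x) e).trans
      (mul_le_mul_of_nonneg_right (h.norm_gradient_le hx) (norm_nonneg e))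

lemma abs_sub_sub_le (h : IsNearlyLinearOn f s e a θ) (hf : Differentiable ℝ f)
    (hs : Convex ℝ s) {x y : E} (hx : x ∈ s) (hy : y ∈ s) :
    |f y - f x - a * inner ℝ e (y - x)| ≤ (1 - (θ : ℝ)⁻¹) * a * ‖y - x‖ := by
  have hbound (z : E) (hz : z ∈ s) :
      ‖fderiv ℝ f z - a • innerSL ℝ e‖ ≤ (1 - (θ : ℝ)⁻¹) * a := by
    have hdual : fderiv ℝ f z - a • innerSL ℝ e = innerSL ℝ (∇ f z - a • e) := by
      ext v
      simp [inner_gradient_left]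
    rw [hdual, innerSL_apply_norm]
    exact h.norm_gradient_sub_le z hz
  simpa using hs.norm_image_sub_le_of_norm_fderiv_le' (fun z _ => hf z) hbound hx hy

lemma strictMonoOn_line (h : IsNearlyLinearOn f s e a θ) (hf : Differentiable ℝ f)
    (hs : Convex ℝ s) (y : E) :
    StrictMonoOn (fun t : ℝ => f (t • e + y)) {t | t • e + y ∈ s} := by
  intro t ht t' ht' htt'
  have hdiff : t' • e + y - (t • e + y) = (t' - t) • e := by rw [sub_smul]; abel
  have hmv := h.abs_sub_sub_le hf hs ht ht'
  rw [hdiff, inner_smul_right, real_inner_self_eq_norm_sq, norm_smul, h.norm_eq_one,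
    Real.norm_of_nonneg (sub_pos.2 htt').le] at hmv
  have hpos : 0 < (θ : ℝ)⁻¹ * a * (t' - t) :=
    mul_pos (mul_pos (inv_pos.2 h.theta_pos) h.pos) (sub_pos.2 htt')
  change f (t • e + y) < f (t' • e + y)
  linarith [(abs_le.1 hmv).1]

lemma antilipschitzWith_orthogonalProjection (h : IsNearlyLinearOn f s e a θ)
    (hf : Differentiable ℝ f) (hs : Convex ℝ s) :
    AntilipschitzWith θ (({x | f x = 0} ∩ s).domRestrict (ℝ ∙ e)ᗮ.orthogonalProjectionOnto) := by
  refine AntilipschitzWith.of_le_mul_dist fun ⟨x, hfx, hx⟩ ⟨y, hfy, hy⟩ => ?_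
  have hmv : |inner ℝ e (x - y)| ≤ (1 - (θ : ℝ)⁻¹) * ‖x - y‖ := by
    have := h.abs_sub_sub_le hf hs hy hx
    rw [hfx, hfy, sub_self, zero_sub, abs_neg, abs_mul, abs_of_pos h.pos, mul_comm _ a, mul_assoc]
      at this
    exact le_of_mul_le_mul_left this h.pos
  have hsplit : ‖x - y‖ ≤ |inner ℝ e (x - y)| + ‖(ℝ ∙ e)ᗮ.orthogonalProjectionOnto (x - y)‖ := by
    conv_lhs => rw [← (ℝ ∙ e).starProjection_add_starProjection_orthogonal (x - y)]
    refine (norm_add_le _ _).trans_eq ?_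
    rw [Submodule.starProjection_unit_singleton ℝ h.norm_eq_one, norm_smul, h.norm_eq_one, mul_one,
      Real.norm_eq_abs]
    rfl
  have hdist : dist x y ≤ θ * ‖(ℝ ∙ e)ᗮ.orthogonalProjectionOnto (x - y)‖ := by
    rw [dist_eq_norm, ← inv_mul_le_iff₀ h.theta_pos]
    linarith
  simpa only [Subtype.dist_eq, domRestrict_apply, dist_eq_norm, map_sub] using hdist

end Gradient

section Slicing

variable {E : Type*} [NormedAddCommGroup E] [InnerProductSpace ℝ E] [FiniteDimensional ℝ E]
  {f ψ : E → ℝ} {s : Set E} {e : E} {a : ℝ} {θ : ℝ≥0}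

lemma lineFlux_eq (h : IsNearlyLinearOn f s e a θ) (hf : Differentiable ℝ f)
    (hs : Convex ℝ s) (hψ : IsTestFunction ψ) (hψs : tsupport ψ ⊆ s) {x : E} (hx : x ∈ s)
    (hfx : f x = 0) :
    lineFlux f ψ e ((ℝ ∙ e)ᗮ.orthogonalProjectionOnto x) = ψ x := by
  have hx_eq : inner ℝ e x • e + (ℝ ∙ e)ᗮ.orthogonalProjectionOnto x = x := by
    rw [← Submodule.starProjection_unit_singleton ℝ h.norm_eq_one]
    exact (ℝ ∙ e).starProjection_add_starProjection_orthogonal x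
  have hline (y : E) : Continuous fun t : ℝ => t • e + y := by fun_prop
  refine (nodalFlux_eq_of_strictMonoOn (t₀ := inner ℝ e x) (hf.continuous.comp (hline _)).measurable
    (contDiff_comp_line hψ.contDiff e _)
    (hasCompactSupport_comp_line hψ.hasCompactSupport h.norm_eq_one _)
    ((tsupport_comp_subset_preimage ψ (hline _)).trans (preimage_mono hψs))
    (h.strictMonoOn_line hf hs _) ?_ ?_).trans (congrArg ψ hx_eq)
  · rwa [mem_preimage, hx_eq]
  · rwa [Function.comp_apply, hx_eq]

lemma lineFlux_eq_zero (h : IsNearlyLinearOn f s e a θ) (hf : Continuous f)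
    (hs : Convex ℝ s) (hψ : IsTestFunction ψ) (hψs : tsupport ψ ⊆ s) {y : (ℝ ∙ e)ᗮ}
    (hy : y ∉ (ℝ ∙ e)ᗮ.orthogonalProjectionOnto '' ({x | f x = 0} ∩ s)) :
    lineFlux f ψ e y = 0 := by
  have hline : Continuous fun t : ℝ => t • e + (y : E) := by fun_prop
  have hconvex : Convex ℝ {t : ℝ | t • e + (y : E) ∈ s} :=
    (hs.translate_preimage_left (y : E)).linear_preimage (LinearMap.toSpanSingleton ℝ E e)
  refine nodalFlux_eq_zero_of_ne_zero (hf.comp hline).continuousOn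
    (contDiff_comp_line hψ.contDiff e _)
    (hasCompactSupport_comp_line hψ.hasCompactSupport h.norm_eq_one _) hconvex.isPreconnected
    ((tsupport_comp_subset_preimage ψ hline).trans (preimage_mono hψs)) fun t ht hft => hy ?_
  refine ⟨t • e + y, ⟨hft, ht⟩, ?_⟩
  rw [map_add, Submodule.orthogonalProjectionOnto_mem_subspace_eq_self, add_eq_right]
  exact Submodule.orthogonalProjectionOnto_orthogonal_apply_eq_zero
    (Submodule.smul_mem _ t (Submodule.mem_span_singleton_self e))

lemma lineFlux_nonneg (h : IsNearlyLinearOn f s e a θ) (hf : Differentiable ℝ f)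
    (hs : Convex ℝ s) (hψ : IsTestFunction ψ) (hψs : tsupport ψ ⊆ s) (y : (ℝ ∙ e)ᗮ) :
    0 ≤ lineFlux f ψ e y := by
  by_cases hy : y ∈ (ℝ ∙ e)ᗮ.orthogonalProjectionOnto '' ({x | f x = 0} ∩ s)
  · obtain ⟨x, ⟨hfx, hx⟩, rfl⟩ := hy
    exact (hψ.nonneg x).trans_eq (h.lineFlux_eq hf hs hψ hψs hx hfx).symm
  · exact (h.lineFlux_eq_zero hf.continuous hs hψ hψs hy).ge

variable {m : ℕ} [Fact (Module.finrank ℝ E = m + 1)]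

lemma finrank_orthogonal_eq (h : IsNearlyLinearOn f s e a θ) :
    Module.finrank ℝ (ℝ ∙ e)ᗮ = m :=
  Submodule.finrank_orthogonal_span_singleton (norm_ne_zero_iff.1 (by simp [h.norm_eq_one]))

variable [MeasurableSpace E] [BorelSpace E]

lemma ofReal_nodalFlux_smul_const_eq (h : IsNearlyLinearOn f s e a θ) (hf : Differentiable ℝ f)
    (hs : Convex ℝ s) (hψ : IsTestFunction ψ) (hψs : tsupport ψ ⊆ s) :
    ENNReal.ofReal (nodalFlux f fun x => ψ x • e) =
      ∫⁻ y : (ℝ ∙ e)ᗮ, ENNReal.ofReal (lineFlux f ψ e y) ∂μHE[m] := by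
  rw [nodalFlux_smul_const_eq_integral hf.continuous hψ.contDiff hψ.hasCompactSupport
    h.norm_eq_one, ofReal_integral_eq_lintegral_ofReal
    (integrable_lineFlux hf.continuous hψ.contDiff hψ.hasCompactSupport h.norm_eq_one)
    (Eventually.of_forall (h.lineFlux_nonneg hf hs hψ hψs)),
    ← InnerProductSpace.euclideanHausdorffMeasure_eq_volume, h.finrank_orthogonal_eq (m := m)]

lemma ofReal_nodalFlux_smul_const_le (h : IsNearlyLinearOn f s e a θ) (hf : Differentiable ℝ f)
    (hs : Convex ℝ s) (hsm : MeasurableSet s) (hψ : IsTestFunction ψ) (hψs : tsupport ψ ⊆ s) :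
    ENNReal.ofReal (nodalFlux f fun x => ψ x • e) ≤
      ∫⁻ x in {x | f x = 0}, ENNReal.ofReal (ψ x) ∂μHE[m] := by
  let P : E → (ℝ ∙ e)ᗮ := (ℝ ∙ e)ᗮ.orthogonalProjectionOnto
  let M := {x | f x = 0} ∩ s
  let J : (ℝ ∙ e)ᗮ → ℝ≥0∞ := fun y => ENNReal.ofReal (lineFlux f ψ e y)
  have hM : MeasurableSet M := (isClosed_eq hf.continuous continuous_const).measurableSet.inter hsm
  have hJ (y : (ℝ ∙ e)ᗮ) : J y = (P '' M).indicator J y := by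
    by_cases hy : y ∈ P '' M
    · rw [indicator_of_mem hy]
    · rw [indicator_of_notMem hy]
      exact (congrArg _ (h.lineFlux_eq_zero hf.continuous hs hψ hψs hy)).trans ENNReal.ofReal_zero
  calc ENNReal.ofReal (nodalFlux f fun x => ψ x • e)
      = ∫⁻ y, (P '' M).indicator J y ∂μHE[m] := by
        rw [h.ofReal_nodalFlux_smul_const_eq (m := m) hf hs hψ hψs]
        exact lintegral_congr hJ
    _ ≤ ∫⁻ y in P '' M, J y ∂μHE[m] := lintegral_indicator_le _ _
    _ ≤ ∫⁻ y, J y ∂((μHE[m] : Measure E).restrict M).map P :=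
        lintegral_mono' (hausdorff_restrict_image_le_map
          (Submodule.lipschitzWith_orthogonalProjectionOnto _) M m) le_rfl
    _ ≤ ∫⁻ x in M, J (P x) ∂μHE[m] := lintegral_map_le _ _
    _ = ∫⁻ x in M, ENNReal.ofReal (ψ x) ∂μHE[m] :=
        setLIntegral_congr_fun hM fun x hx =>
          congrArg ENNReal.ofReal (h.lineFlux_eq hf hs hψ hψs hx.2 hx.1)
    _ ≤ ∫⁻ x in {x | f x = 0}, ENNReal.ofReal (ψ x) ∂μHE[m] :=
        lintegral_mono_set inter_subset_left

lemma lintegral_nodal_le (h : IsNearlyLinearOn f s e a θ) (hf : Differentiable ℝ f)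
    (hs : Convex ℝ s) (hsm : MeasurableSet s) (hψ : IsTestFunction ψ) (hψs : tsupport ψ ⊆ s) :
    ∫⁻ x in {x | f x = 0}, ENNReal.ofReal (ψ x) ∂μHE[m] ≤
      (θ : ℝ≥0∞) ^ m * ENNReal.ofReal (nodalFlux f fun x => ψ x • e) := by
  let P : E → (ℝ ∙ e)ᗮ := (ℝ ∙ e)ᗮ.orthogonalProjectionOnto
  let M := {x | f x = 0} ∩ s
  let J : (ℝ ∙ e)ᗮ → ℝ≥0∞ := fun y => ENNReal.ofReal (lineFlux f ψ e y)
  have hM : MeasurableSet M := (isClosed_eq hf.continuous continuous_const).measurableSet.inter hsm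
  have hPm : Measurable P := (ℝ ∙ e)ᗮ.orthogonalProjectionOnto.continuous.measurable
  have hmap : ((μHE[m] : Measure E).restrict M).map P ≤ (θ : ℝ≥0∞) ^ m • μHE[m] :=
    map_hausdorff_restrict_le hPm (h.antilipschitzWith_orthogonalProjection hf hs) m
  have hJ : AEMeasurable J (((μHE[m] : Measure E).restrict M).map P) := by
    have hint := integrable_lineFlux hf.continuous hψ.contDiff hψ.hasCompactSupport h.norm_eq_one
    rw [← InnerProductSpace.euclideanHausdorffMeasure_eq_volume,
      h.finrank_orthogonal_eq (m := m)] at hint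
    exact hint.aemeasurable.ennreal_ofReal.mono_ac
      ((Measure.absolutelyContinuous_of_le hmap).trans
        (Measure.smul_absolutelyContinuous))
  have hsupp : Function.support (fun x => ENNReal.ofReal (ψ x)) ⊆ s := by
    refine (Function.support_comp_subset ENNReal.ofReal_zero ψ).trans ?_
    exact (subset_tsupport ψ).trans hψs
  calc ∫⁻ x in {x | f x = 0}, ENNReal.ofReal (ψ x) ∂μHE[m]
      = ∫⁻ x in M, ENNReal.ofReal (ψ x) ∂μHE[m] := by
        rw [← setLIntegral_eq_of_support_subset hsupp, Measure.restrict_restrict hsm, inter_comm]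
    _ = ∫⁻ x in M, J (P x) ∂μHE[m] :=
        setLIntegral_congr_fun hM fun x hx =>
          congrArg ENNReal.ofReal (h.lineFlux_eq hf hs hψ hψs hx.2 hx.1).symm
    _ = ∫⁻ y, J y ∂((μHE[m] : Measure E).restrict M).map P :=
        (lintegral_map' hJ hPm.aemeasurable).symm
    _ ≤ ∫⁻ y, J y ∂((θ : ℝ≥0∞) ^ m • μHE[m]) := lintegral_mono' hmap le_rfl
    _ = (θ : ℝ≥0∞) ^ m * ENNReal.ofReal (nodalFlux f fun x => ψ x • e) := by
        rw [lintegral_smul_measure, h.ofReal_nodalFlux_smul_const_eq (m := m) hf hs hψ hψs,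
          smul_eq_mul]

end Slicing

end IsNearlyLinearOn

section GradientField

variable {E : Type*} [NormedAddCommGroup E] [InnerProductSpace ℝ E] [CompleteSpace E] {f : E → ℝ}

lemma contDiff_gradient {k l : WithTop ℕ∞} (hf : ContDiff ℝ l f) (hkl : k + 1 ≤ l) :
    ContDiff ℝ k (∇ f) :=
  (InnerProductSpace.toDual ℝ E).symm.contDiff.comp (hf.fderiv_right hkl)

lemma continuous_gradient (hf : ContDiff ℝ 1 f) : Continuous (∇ f) :=
  (contDiff_gradient hf (zero_add 1).le).continuous

lemma fderiv_gradient_self (f : E → ℝ) (x : E) : fderiv ℝ f x (∇ f x) = ‖∇ f x‖ ^ 2 := by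
  rw [← inner_gradient_left, real_inner_self_eq_norm_sq]

lemma exists_isNearlyLinearOn_ball (hf : ContDiff ℝ 1 f) {p : E} (hp : ∇ f p ≠ 0) {θ : ℝ≥0}
    (hθ : 1 < θ) :
    ∃ r > 0, ∃ e a, IsNearlyLinearOn f (Metric.ball p r) e a θ := by
  have hgrad : 0 < ‖∇ f p‖ := norm_pos_iff.2 hp
  have hε : 0 < (1 - (θ : ℝ)⁻¹) * ‖∇ f p‖ :=
    mul_pos (sub_pos.2 (inv_lt_one_of_one_lt₀ (mod_cast hθ))) hgrad
  obtain ⟨r, hr, hball⟩ := Metric.continuousAt_iff.1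
    (continuous_gradient hf).continuousAt _ hε
  refine ⟨r, hr, ‖∇ f p‖⁻¹ • ∇ f p, ‖∇ f p‖, norm_smul_inv_norm hp, hgrad, hθ.le, fun x hx => ?_⟩
  rw [smul_inv_smul₀ hgrad.ne', ← dist_eq_norm]
  exact (hball hx).le

lemma IsTestFunction.contDiff_smul_gradient {ψ : E → ℝ} (hψ : IsTestFunction ψ)
    (hf : ContDiff ℝ 2 f) : ContDiff ℝ 1 fun x => ψ x • ∇ f x :=
  hψ.contDiff.smul (contDiff_gradient hf one_add_one_eq_two.le)

end GradientField

section PartitionOfUnity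

variable {E : Type*} [NormedAddCommGroup E] [InnerProductSpace ℝ E] [FiniteDimensional ℝ E]

lemma IsTestFunction.exists_sum_subordinate {ψ : E → ℝ} (hψ : IsTestFunction ψ)
    {r : E → ℝ}
    (hr : ∀ p ∈ tsupport ψ, 0 < r p) :
    ∃ (t : Finset E) (φ : t → E → ℝ), (t : Set E) ⊆ tsupport ψ ∧ (∀ p, IsTestFunction (φ p)) ∧
      (∀ p : t, tsupport (φ p) ⊆ Metric.ball p (r p)) ∧ ψ = fun x => ∑ p, φ p x := by
  obtain ⟨t, ht, hcover⟩ := hψ.hasCompactSupport.isCompact.elim_nhds_subcover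
    (fun p => Metric.ball p (r p)) fun p hp => Metric.ball_mem_nhds p (hr p hp)
  obtain ⟨ρ, hρ⟩ := SmoothPartitionOfUnity.exists_isSubordinate (modelWithCornersSelf ℝ E)
    (isClosed_tsupport ψ) (fun p : t => Metric.ball (p : E) (r p)) (fun p => Metric.isOpen_ball)
    (by rwa [iUnion_subtype])
  refine ⟨t, fun p x => ρ p x * ψ x, ht, fun p => ⟨?_, hψ.hasCompactSupport.mul_left, ?_⟩,
    fun p => (tsupport_mul_subset_left).trans (hρ p), funext fun x => ?_⟩
  · exact ((ρ p).contMDiff.contDiff.of_le (mod_cast le_top)).mul hψ.contDiff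
  · exact fun x => mul_nonneg (ρ.nonneg p x) (hψ.nonneg x)
  · rw [← Finset.sum_mul]
    by_cases hx : x ∈ tsupport ψ
    · have hone := ρ.sum_eq_one hx
      rw [finsum_eq_sum_of_fintype] at hone
      rw [hone, one_mul]
    · rw [image_eq_zero_of_notMem_tsupport hx, mul_zero]

end PartitionOfUnity

lemma le_of_forall_one_lt_le_pow_mul {A B : ℝ≥0∞} (k : ℕ)
    (h : ∀ θ : ℝ≥0, 1 < θ → A ≤ (θ : ℝ≥0∞) ^ k * B) : A ≤ B := by
  have hlim : Tendsto (fun θ : ℝ≥0 => (θ : ℝ≥0∞) ^ k * B) (𝓝[>] 1) (𝓝 (1 ^ k * B)) :=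
    ENNReal.Tendsto.mul_const
      (((ENNReal.continuous_pow k).comp ENNReal.continuous_coe).tendsto' 1 _ (by simp)
        |>.mono_left nhdsWithin_le_nhds) (.inl (by simp))
  rw [one_pow, one_mul] at hlim
  exact ge_of_tendsto hlim (eventually_mem_nhdsWithin.mono h)

section NodalIntegral

variable {E : Type*} [NormedAddCommGroup E] [InnerProductSpace ℝ E] [FiniteDimensional ℝ E]
  [MeasurableSpace E] [BorelSpace E]

/-- The integral of `ψ ‖∇f‖` over the nodal set of `f` with respect to the `m`-dimensional
Hausdorff measure, normalised to be Lebesgue measure on `m`-dimensional subspaces. -/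
def nodalIntegral (m : ℕ) (f ψ : E → ℝ) : ℝ≥0∞ :=
  ∫⁻ x in {x | f x = 0}, ENNReal.ofReal (ψ x * ‖∇ f x‖) ∂μHE[m]

/-- The flux of `ψ ∇f` through the nodal set of `f`. -/
def gradientFlux (f ψ : E → ℝ) : ℝ := nodalFlux f fun x => ψ x • ∇ f x

variable {f ψ : E → ℝ}

lemma gradientFlux_nonneg (hf : ContDiff ℝ 2 f) (hψ : IsTestFunction ψ) : 0 ≤ gradientFlux f ψ := by
  refine nodalFlux_nonneg (hf.of_le one_le_two) (hψ.contDiff_smul_gradient hf)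
    hψ.hasCompactSupport.smul_right fun x => ?_
  rw [map_smul, fderiv_gradient_self]
  exact mul_nonneg (hψ.nonneg x) (sq_nonneg _)

lemma gradientFlux_sum {ι : Type*} [Fintype ι] {φ : ι → E → ℝ} (hf : ContDiff ℝ 2 f)
    (hφ : ∀ i, IsTestFunction (φ i)) :
    gradientFlux f (fun x => ∑ i, φ i x) = ∑ i, gradientFlux f (φ i) := by
  simp only [gradientFlux, Finset.sum_smul]
  exact nodalFlux_sum hf.continuous (fun i => (hφ i).contDiff_smul_gradient hf) fun i =>
    (hφ i).hasCompactSupport.smul_right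

lemma nodalIntegral_sum {ι : Type*} [Fintype ι] {φ : ι → E → ℝ} (m : ℕ) (hf : ContDiff ℝ 1 f)
    (hφ : ∀ i, IsTestFunction (φ i)) :
    nodalIntegral m f (fun x => ∑ i, φ i x) = ∑ i, nodalIntegral m f (φ i) := by
  have hgrad := continuous_gradient hf
  simp only [nodalIntegral]
  rw [← lintegral_finsetSum]
  · refine lintegral_congr fun x => ?_
    rw [Finset.sum_mul, ENNReal.ofReal_sum_of_nonneg]
    exact fun i _ => mul_nonneg ((hφ i).nonneg x) (norm_nonneg _)
  · exact fun i _ => ((hφ i).contDiff.continuous.mul hgrad.norm).measurable.ennreal_ofReal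

namespace IsNearlyLinearOn

variable {s : Set E} {e : E} {a : ℝ} {θ : ℝ≥0}

lemma gradientFlux_le (h : IsNearlyLinearOn f s e a θ) (hf : ContDiff ℝ 2 f)
    (hψ : IsTestFunction ψ) (hψs : tsupport ψ ⊆ s) :
    gradientFlux f ψ ≤ θ ^ 3 * a * nodalFlux f fun x => ψ x • e := by
  rw [← nodalFlux_const_smul (hψ.contDiff_smul_const e)]
  refine nodalFlux_mono (hf.of_le one_le_two) (hψ.contDiff_smul_gradient hf)
    hψ.hasCompactSupport.smul_right (contDiff_const.smul (hψ.contDiff_smul_const e))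
    hψ.hasCompactSupport.smul_right.smul_left fun x => ?_
  simp only [map_smul, smul_eq_mul, fderiv_gradient_self]
  by_cases hx : x ∈ s
  · have hbound : ‖∇ f x‖ ^ 2 ≤ θ ^ 3 * a * fderiv ℝ f x e :=
      calc ‖∇ f x‖ ^ 2 ≤ (θ * a) ^ 2 := by gcongr; exact h.norm_gradient_le hx
        _ = θ ^ 2 * a * a := by ring
        _ ≤ θ ^ 2 * a * (θ * fderiv ℝ f x e) :=
            mul_le_mul_of_nonneg_left (h.le_fderiv_apply hx)
              (mul_nonneg (sq_nonneg _) h.pos.le)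
        _ = θ ^ 3 * a * fderiv ℝ f x e := by ring
    linarith [mul_le_mul_of_nonneg_left hbound (hψ.nonneg x)]
  · simp [image_eq_zero_of_notMem_tsupport fun hx' => hx (hψs hx')]

lemma le_gradientFlux (h : IsNearlyLinearOn f s e a θ) (hf : ContDiff ℝ 2 f)
    (hψ : IsTestFunction ψ) (hψs : tsupport ψ ⊆ s) :
    a * nodalFlux f (fun x => ψ x • e) ≤ θ ^ 3 * gradientFlux f ψ := by
  rw [gradientFlux, ← nodalFlux_const_smul (hψ.contDiff_smul_const e),
    ← nodalFlux_const_smul (hψ.contDiff_smul_gradient hf)]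
  refine nodalFlux_mono (hf.of_le one_le_two)
    (contDiff_const.smul (hψ.contDiff_smul_const e))
    hψ.hasCompactSupport.smul_right.smul_left (contDiff_const.smul (hψ.contDiff_smul_gradient hf))
    hψ.hasCompactSupport.smul_right.smul_left fun x => ?_
  simp only [map_smul, smul_eq_mul, fderiv_gradient_self]
  by_cases hx : x ∈ s
  · have hbound : a * fderiv ℝ f x e ≤ θ ^ 3 * ‖∇ f x‖ ^ 2 :=
      calc a * fderiv ℝ f x e ≤ a * (θ * a) :=
            mul_le_mul_of_nonneg_left (h.fderiv_apply_le hx) h.pos.le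
        _ = θ * a ^ 2 := by ring
        _ ≤ θ * (θ * ‖∇ f x‖) ^ 2 := by
            have := h.pos.le
            gcongr
            exact h.le_norm_gradient hx
        _ = θ ^ 3 * ‖∇ f x‖ ^ 2 := by ring
    linarith [mul_le_mul_of_nonneg_left hbound (hψ.nonneg x)]
  · simp [image_eq_zero_of_notMem_tsupport fun hx' => hx (hψs hx')]

variable {m : ℕ} [Fact (Module.finrank ℝ E = m + 1)]

lemma nodalIntegral_le (h : IsNearlyLinearOn f s e a θ) (hf : ContDiff ℝ 2 f)
    (hs : Convex ℝ s) (hsm : MeasurableSet s) (hψ : IsTestFunction ψ) (hψs : tsupport ψ ⊆ s) :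
    nodalIntegral m f ψ ≤ (θ : ℝ≥0∞) ^ (m + 4) * ENNReal.ofReal (gradientFlux f ψ) := by
  have hweight (x : E) :
      ENNReal.ofReal (ψ x * ‖∇ f x‖) ≤ ENNReal.ofReal (θ * a) * ENNReal.ofReal (ψ x) := by
    rw [← ENNReal.ofReal_mul (mul_nonneg θ.coe_nonneg h.pos.le)]
    refine ENNReal.ofReal_le_ofReal ?_
    by_cases hx : x ∈ s
    · rw [mul_comm]
      exact mul_le_mul_of_nonneg_right (h.norm_gradient_le hx) (hψ.nonneg x)
    · simp [image_eq_zero_of_notMem_tsupport fun hx' => hx (hψs hx')]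
  calc nodalIntegral m f ψ
      ≤ ∫⁻ x in {x | f x = 0}, ENNReal.ofReal (θ * a) * ENNReal.ofReal (ψ x) ∂μHE[m] :=
        lintegral_mono hweight
    _ = ENNReal.ofReal (θ * a) * ∫⁻ x in {x | f x = 0}, ENNReal.ofReal (ψ x) ∂μHE[m] :=
        lintegral_const_mul' _ _ ENNReal.ofReal_ne_top
    _ ≤ ENNReal.ofReal (θ * a) * (θ ^ m * ENNReal.ofReal (nodalFlux f fun x => ψ x • e)) :=
        mul_le_mul_right (h.lintegral_nodal_le (hf.differentiable two_ne_zero) hs hsm hψ hψs) _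
    _ = θ ^ (m + 1) * ENNReal.ofReal (a * nodalFlux f fun x => ψ x • e) := by
        rw [ENNReal.ofReal_mul θ.coe_nonneg, ENNReal.ofReal_mul h.pos.le, ENNReal.ofReal_coe_nnreal]
        ring
    _ ≤ θ ^ (m + 1) * ENNReal.ofReal (θ ^ 3 * gradientFlux f ψ) :=
        mul_le_mul_right (ENNReal.ofReal_le_ofReal (h.le_gradientFlux hf hψ hψs)) _
    _ = θ ^ (m + 4) * ENNReal.ofReal (gradientFlux f ψ) := by
        rw [ENNReal.ofReal_mul (by positivity), ENNReal.ofReal_pow θ.coe_nonneg,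
          ENNReal.ofReal_coe_nnreal]
        ring

lemma ofReal_gradientFlux_le (h : IsNearlyLinearOn f s e a θ) (hf : ContDiff ℝ 2 f)
    (hs : Convex ℝ s) (hsm : MeasurableSet s) (hψ : IsTestFunction ψ) (hψs : tsupport ψ ⊆ s) :
    ENNReal.ofReal (gradientFlux f ψ) ≤ (θ : ℝ≥0∞) ^ 4 * nodalIntegral m f ψ := by
  have hweight (x : E) :
      ENNReal.ofReal a * ENNReal.ofReal (ψ x) ≤ θ * ENNReal.ofReal (ψ x * ‖∇ f x‖) := by
    rw [← ENNReal.ofReal_mul h.pos.le, ← ENNReal.ofReal_coe_nnreal,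
      ← ENNReal.ofReal_mul θ.coe_nonneg]
    refine ENNReal.ofReal_le_ofReal ?_
    by_cases hx : x ∈ s
    · linarith [mul_le_mul_of_nonneg_left (h.le_norm_gradient hx) (hψ.nonneg x)]
    · simp [image_eq_zero_of_notMem_tsupport fun hx' => hx (hψs hx')]
  calc ENNReal.ofReal (gradientFlux f ψ)
      ≤ ENNReal.ofReal (θ ^ 3 * a * nodalFlux f fun x => ψ x • e) :=
        ENNReal.ofReal_le_ofReal (h.gradientFlux_le hf hψ hψs)
    _ = θ ^ 3 * (ENNReal.ofReal a * ENNReal.ofReal (nodalFlux f fun x => ψ x • e)) := by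
        rw [mul_assoc, ENNReal.ofReal_mul (by positivity), ENNReal.ofReal_mul h.pos.le,
          ENNReal.ofReal_pow θ.coe_nonneg, ENNReal.ofReal_coe_nnreal]
    _ ≤ θ ^ 3 * (ENNReal.ofReal a * ∫⁻ x in {x | f x = 0}, ENNReal.ofReal (ψ x) ∂μHE[m]) := by
        gcongr
        exact h.ofReal_nodalFlux_smul_const_le (hf.differentiable two_ne_zero) hs hsm hψ hψs
    _ = θ ^ 3 * ∫⁻ x in {x | f x = 0}, ENNReal.ofReal a * ENNReal.ofReal (ψ x) ∂μHE[m] := by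
        rw [lintegral_const_mul' _ _ ENNReal.ofReal_ne_top]
    _ ≤ θ ^ 3 * ∫⁻ x in {x | f x = 0}, θ * ENNReal.ofReal (ψ x * ‖∇ f x‖) ∂μHE[m] :=
        mul_le_mul_right (lintegral_mono hweight) _
    _ = θ ^ 4 * nodalIntegral m f ψ := by
        rw [lintegral_const_mul' _ _ ENNReal.coe_ne_top, nodalIntegral]
        ring

end IsNearlyLinearOn

variable {m : ℕ} [Fact (Module.finrank ℝ E = m + 1)]

lemma nodalIntegral_eq_of_gradient_ne_zero (hf : ContDiff ℝ 2 f) (hψ : IsTestFunction ψ)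
    (hreg : ∀ x ∈ tsupport ψ, ∇ f x ≠ 0) :
    nodalIntegral m f ψ = ENNReal.ofReal (gradientFlux f ψ) := by
  have hlocal (θ : ℝ≥0) (hθ : 1 < θ) (p : E) : ∃ r, p ∈ tsupport ψ → 0 < r ∧
      ∃ e a, IsNearlyLinearOn f (Metric.ball p r) e a θ := by
    by_cases hp : p ∈ tsupport ψ
    · obtain ⟨r, hr, hlin⟩ := exists_isNearlyLinearOn_ball (hf.of_le one_le_two) (hreg p hp) hθ
      exact ⟨r, fun _ => ⟨hr, hlin⟩⟩
    · exact ⟨0, fun hp' => absurd hp' hp⟩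
  have hcompare (θ : ℝ≥0) (hθ : 1 < θ) :
      nodalIntegral m f ψ ≤ (θ : ℝ≥0∞) ^ (m + 4) * ENNReal.ofReal (gradientFlux f ψ) ∧
      ENNReal.ofReal (gradientFlux f ψ) ≤ (θ : ℝ≥0∞) ^ 4 * nodalIntegral m f ψ := by
    choose r hr using hlocal θ hθ
    obtain ⟨t, φ, ht, hφ, hsupp, hsum⟩ := hψ.exists_sum_subordinate fun p hp => (hr p hp).1
    have hflux :
        ENNReal.ofReal (gradientFlux f ψ) = ∑ p, ENNReal.ofReal (gradientFlux f (φ p)) := by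
      rw [hsum, gradientFlux_sum hf hφ,
        ENNReal.ofReal_sum_of_nonneg fun p _ => gradientFlux_nonneg hf (hφ p)]
    have hint : nodalIntegral m f ψ = ∑ p, nodalIntegral m f (φ p) := by
      rw [hsum, nodalIntegral_sum m (hf.of_le one_le_two) hφ]
    rw [hflux, hint, Finset.mul_sum, Finset.mul_sum]
    constructor <;> refine Finset.sum_le_sum fun p _ => ?_ <;>
      obtain ⟨e, a, hlin⟩ := (hr p (ht p.2)).2
    · exact hlin.nodalIntegral_le hf (convex_ball _ _) measurableSet_ball (hφ p) (hsupp p)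
    · exact hlin.ofReal_gradientFlux_le hf (convex_ball _ _) measurableSet_ball (hφ p) (hsupp p)
  exact le_antisymm (le_of_forall_one_lt_le_pow_mul _ fun θ hθ => (hcompare θ hθ).1)
    (le_of_forall_one_lt_le_pow_mul _ fun θ hθ => (hcompare θ hθ).2)

end NodalIntegral

section GradientCutoff

lemma deriv_smoothTransition_eq_zero {t : ℝ} (ht : t ≤ 0 ∨ 1 ≤ t) :
    deriv Real.smoothTransition t = 0 := by
  rcases ht with h | h
  · refine IsLocalMin.deriv_eq_zero (Eventually.of_forall fun s => ?_)
    rw [Real.smoothTransition.zero_of_nonpos h]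
    exact Real.smoothTransition.nonneg s
  · refine IsLocalMax.deriv_eq_zero (Eventually.of_forall fun s => ?_)
    rw [Real.smoothTransition.one_of_one_le h]
    exact Real.smoothTransition.le_one s

lemma exists_abs_mul_deriv_smoothTransition_le :
    ∃ C, ∀ t, |t * deriv Real.smoothTransition (t - 1)| ≤ C := by
  refine HasCompactSupport.exists_bound_of_continuous
    (f := fun t : ℝ => t * deriv Real.smoothTransition (t - 1))
    (HasCompactSupport.intro (isCompact_Icc (a := 1) (b := 2)) fun t ht => ?_) ?_
  · rw [deriv_smoothTransition_eq_zero, mul_zero]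
    rw [mem_Icc, not_and_or, not_le, not_le] at ht
    exact ht.imp (fun h => by linarith) fun h => by linarith
  · exact continuous_id.mul ((Real.smoothTransition.contDiff.continuous_deriv le_rfl).comp
      (continuous_id.sub continuous_const))

variable {E : Type*} [NormedAddCommGroup E] [InnerProductSpace ℝ E]

/-- A cutoff that vanishes where `k ‖∇f‖² ≤ 1` and equals `1` where `k ‖∇f‖² ≥ 2`, used to stay
away from the critical points of `f`. -/
def gradientCutoff [CompleteSpace E] (f : E → ℝ) (k : ℕ) (x : E) : ℝ :=
  Real.smoothTransition (k * ‖∇ f x‖ ^ 2 - 1)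

section CompleteSpace

variable [CompleteSpace E] {f ψ : E → ℝ}

lemma contDiff_gradientCutoff (hf : ContDiff ℝ 2 f) (k : ℕ) : ContDiff ℝ 1 (gradientCutoff f k) :=
  Real.smoothTransition.contDiff.comp ((contDiff_const.mul
    ((contDiff_gradient hf one_add_one_eq_two.le).norm_sq ℝ)).sub contDiff_const)

lemma gradientCutoff_mem_Icc (f : E → ℝ) (k : ℕ) (x : E) : gradientCutoff f k x ∈ Icc 0 1 :=
  ⟨Real.smoothTransition.nonneg _, Real.smoothTransition.le_one _⟩

lemma monotone_gradientCutoff (f : E → ℝ) (x : E) : Monotone fun k => gradientCutoff f k x :=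
  fun _ _ hkl => Real.smoothTransition.monotone (by gcongr)

lemma eventually_one_le_mul_sq_norm_sub_one {x : E} (hx : ∇ f x ≠ 0) :
    ∀ᶠ k : ℕ in atTop, 1 ≤ k * ‖∇ f x‖ ^ 2 - 1 := by
  filter_upwards [(tendsto_natCast_atTop_atTop.atTop_mul_const
    (pow_pos (norm_pos_iff.2 hx) 2)).eventually_ge_atTop (2 : ℝ)] with k hk
  linarith

lemma gradient_ne_zero_of_mem_tsupport_gradientCutoff (hf : ContDiff ℝ 1 f) {k : ℕ} {x : E}
    (hx : x ∈ tsupport (gradientCutoff f k)) : ∇ f x ≠ 0 := by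
  have hgrad := continuous_gradient hf
  have hclosed : IsClosed {x | 1 ≤ k * ‖∇ f x‖ ^ 2} :=
    isClosed_le continuous_const (continuous_const.mul (hgrad.norm.pow 2))
  have hle : 1 ≤ k * ‖∇ f x‖ ^ 2 := by
    refine closure_minimal (fun y hy => ?_) hclosed hx
    by_contra hlt
    exact hy (Real.smoothTransition.zero_of_nonpos (sub_nonpos.2 (not_le.1 hlt).le))
  intro hzero
  norm_num [hzero] at hle

lemma fderiv_gradientCutoff_apply (hf : ContDiff ℝ 2 f) (k : ℕ) (x v : E) :
    fderiv ℝ (gradientCutoff f k) x v =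
      deriv Real.smoothTransition (k * ‖∇ f x‖ ^ 2 - 1) *
        (k * (2 * inner ℝ (∇ f x) (fderiv ℝ (∇ f) x v))) := by
  have hgrad := ((contDiff_gradient hf one_add_one_eq_two.le).differentiable
    one_ne_zero x).hasFDerivAt
  have hsmooth := ((Real.smoothTransition.contDiff (n := 1)).differentiable one_ne_zero
    (k * ‖∇ f x‖ ^ 2 - 1)).hasDerivAt
  rw [show gradientCutoff f k = Real.smoothTransition ∘ fun x => k * ‖∇ f x‖ ^ 2 - 1 from rfl,
    (hsmooth.comp_hasFDerivAt x ((hgrad.norm_sq.const_mul _).sub_const 1)).fderiv]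
  simp

/-- The second derivative of `f` along its gradient is `O(‖∇f‖²)`, which on the support of the
derivative of the cutoff compensates the factor `k`. -/
lemma exists_abs_fderiv_gradientCutoff_le (hf : ContDiff ℝ 2 f) :
    ∃ C, ∀ k x, |fderiv ℝ (gradientCutoff f k) x (∇ f x)| ≤ C * ‖fderiv ℝ (∇ f) x‖ := by
  obtain ⟨C, hC⟩ := exists_abs_mul_deriv_smoothTransition_le
  refine ⟨2 * C, fun k x => ?_⟩
  have hinner : |inner ℝ (∇ f x) (fderiv ℝ (∇ f) x (∇ f x))| ≤
      ‖∇ f x‖ ^ 2 * ‖fderiv ℝ (∇ f) x‖ :=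
    calc |inner ℝ (∇ f x) (fderiv ℝ (∇ f) x (∇ f x))|
        ≤ ‖∇ f x‖ * (‖fderiv ℝ (∇ f) x‖ * ‖∇ f x‖) :=
          (abs_real_inner_le_norm _ _).trans (by gcongr; exact ContinuousLinearMap.le_opNorm _ _)
      _ = ‖∇ f x‖ ^ 2 * ‖fderiv ℝ (∇ f) x‖ := by ring
  calc |fderiv ℝ (gradientCutoff f k) x (∇ f x)|
      = 2 * (k * |deriv Real.smoothTransition (k * ‖∇ f x‖ ^ 2 - 1)|) *
          |inner ℝ (∇ f x) (fderiv ℝ (∇ f) x (∇ f x))| := by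
        rw [fderiv_gradientCutoff_apply hf, abs_mul, abs_mul, abs_mul, Nat.abs_cast, abs_two]
        ring
    _ ≤ 2 * (k * |deriv Real.smoothTransition (k * ‖∇ f x‖ ^ 2 - 1)|) *
          (‖∇ f x‖ ^ 2 * ‖fderiv ℝ (∇ f) x‖) := by gcongr
    _ = 2 * |k * ‖∇ f x‖ ^ 2 * deriv Real.smoothTransition (k * ‖∇ f x‖ ^ 2 - 1)| *
          ‖fderiv ℝ (∇ f) x‖ := by
        rw [abs_mul, abs_of_nonneg (by positivity : 0 ≤ k * ‖∇ f x‖ ^ 2)]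
        ring
    _ ≤ 2 * C * ‖fderiv ℝ (∇ f) x‖ := by
        gcongr
        exact hC _

lemma isTestFunction_mul_gradientCutoff (hf : ContDiff ℝ 2 f) (hψ : IsTestFunction ψ) (k : ℕ) :
    IsTestFunction fun x => ψ x * gradientCutoff f k x where
  contDiff := hψ.contDiff.mul (contDiff_gradientCutoff hf k)
  hasCompactSupport := hψ.hasCompactSupport.mul_right
  nonneg x := mul_nonneg (hψ.nonneg x) (gradientCutoff_mem_Icc f k x).1

end CompleteSpace

section FiniteDimensional

variable [FiniteDimensional ℝ E] {f ψ : E → ℝ}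

lemma divergence_mul_gradientCutoff_smul (hf : ContDiff ℝ 2 f) (hψ : IsTestFunction ψ) (k : ℕ)
    (x : E) :
    divergence (fun y => (ψ y * gradientCutoff f k y) • ∇ f y) x =
      gradientCutoff f k x * divergence (fun y => ψ y • ∇ f y) x +
        ψ x * fderiv ℝ (gradientCutoff f k) x (∇ f x) := by
  have hcut := (contDiff_gradientCutoff hf k).differentiable one_ne_zero x
  have hfield := (hψ.contDiff_smul_gradient hf).differentiable one_ne_zero x
  simpa only [smul_smul, mul_comm (ψ _), map_smul, smul_eq_mul] using divergence_smul hcut hfield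

variable [MeasurableSpace E] [BorelSpace E]

lemma ae_fderiv_eq_zero_of_eq_zero {u : E → E} (hu : Differentiable ℝ u) :
    ∀ᵐ x, u x = 0 → fderiv ℝ u x = 0 := by
  have hm : MeasurableSet {x | u x = 0} :=
    (isClosed_eq hu.continuous continuous_const).measurableSet
  have happrox : ApproximatesLinearOn u (0 : E →L[ℝ] E) {x | u x = 0} 0 :=
    fun x hx y hy => by simp_all
  have hbound := happrox.norm_fderiv_sub_le volume hm (fderiv ℝ u) fun x _ =>
    (hu x).hasFDerivAt.hasFDerivWithinAt
  filter_upwards [(ae_restrict_iff' hm).1 hbound] with x hx hux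
  simpa using hx hux

lemma ae_tendsto_divergence_mul_gradientCutoff_smul (hf : ContDiff ℝ 2 f)
    (hψ : IsTestFunction ψ) :
    ∀ᵐ x, Tendsto (fun k => divergence (fun y => (ψ y * gradientCutoff f k y) • ∇ f y) x) atTop
      (𝓝 (divergence (fun y => ψ y • ∇ f y) x)) := by
  have hgrad := (contDiff_gradient hf one_add_one_eq_two.le).differentiable one_ne_zero
  filter_upwards [ae_fderiv_eq_zero_of_eq_zero hgrad] with x hx
  simp only [divergence_mul_gradientCutoff_smul hf hψ]
  by_cases hzero : ∇ f x = 0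
  · have hdiv : divergence (fun y => ψ y • ∇ f y) x = 0 := by
      rw [divergence_smul (hψ.contDiff.differentiable one_ne_zero x) (hgrad x), divergence,
        hx hzero, hzero]
      simp
    simp [hdiv, hzero]
  · refine tendsto_const_nhds.congr' ?_
    filter_upwards [eventually_one_le_mul_sq_norm_sub_one hzero] with k hk
    rw [fderiv_gradientCutoff_apply hf, deriv_smoothTransition_eq_zero (.inr hk), gradientCutoff,
      Real.smoothTransition.one_of_one_le hk]
    ring

lemma tendsto_gradientFlux_mul_gradientCutoff (hf : ContDiff ℝ 2 f) (hψ : IsTestFunction ψ) :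
    Tendsto (fun k => gradientFlux f fun x => ψ x * gradientCutoff f k x) atTop
      (𝓝 (gradientFlux f ψ)) := by
  obtain ⟨C, hC⟩ := exists_abs_fderiv_gradientCutoff_le hf
  have hgrad := contDiff_gradient hf one_add_one_eq_two.le
  have hint {φ : E → ℝ} (hφ : IsTestFunction φ) : Integrable (divergence fun x => φ x • ∇ f x) :=
    integrable_divergence (hφ.contDiff_smul_gradient hf) hφ.hasCompactSupport.smul_right
  refine Tendsto.const_mul _ (tendsto_integral_of_dominated_convergence
    (fun x => |divergence (fun y => ψ y • ∇ f y) x| + ψ x * (C * ‖fderiv ℝ (∇ f) x‖))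
    (fun k => ?_) ?_ (fun k => Eventually.of_forall fun x => ?_) ?_)
  · exact (integrable_sign_mul hf.continuous.measurable
      (hint (isTestFunction_mul_gradientCutoff hf hψ k))).aestronglyMeasurable
  · exact (hint hψ).abs.add ((hψ.contDiff.continuous.mul (continuous_const.mul
      (hgrad.continuous_fderiv one_ne_zero).norm)).integrable_of_hasCompactSupport
        hψ.hasCompactSupport.mul_right)
  · rw [Real.norm_eq_abs, abs_mul, divergence_mul_gradientCutoff_smul hf hψ]
    refine (mul_le_of_le_one_left (abs_nonneg _) (abs_sign_le_one _)).trans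
      ((abs_add_le _ _).trans (add_le_add ?_ ?_))
    · obtain ⟨hnonneg, hle⟩ := gradientCutoff_mem_Icc f k x
      rw [abs_mul, abs_of_nonneg hnonneg]
      exact mul_le_of_le_one_left (abs_nonneg _) hle
    · rw [abs_mul, abs_of_nonneg (hψ.nonneg x)]
      exact mul_le_mul_of_nonneg_left (hC k x) (hψ.nonneg x)
  · exact (ae_tendsto_divergence_mul_gradientCutoff_smul hf hψ).mono fun x hx => hx.const_mul _

lemma tendsto_nodalIntegral_mul_gradientCutoff (m : ℕ) (hf : ContDiff ℝ 2 f)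
    (hψ : IsTestFunction ψ) :
    Tendsto (fun k => nodalIntegral m f fun x => ψ x * gradientCutoff f k x) atTop
      (𝓝 (nodalIntegral m f ψ)) := by
  have hgrad := continuous_gradient (hf.of_le one_le_two)
  refine lintegral_tendsto_of_tendsto_of_monotone (fun k => ?_)
    (Eventually.of_forall fun x k l hkl => ENNReal.ofReal_le_ofReal ?_)
    (Eventually.of_forall fun x => ?_)
  · exact ((isTestFunction_mul_gradientCutoff hf hψ k).contDiff.continuous.mul
      hgrad.norm).measurable.ennreal_ofReal.aemeasurable
  · exact mul_le_mul_of_nonneg_right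
      (mul_le_mul_of_nonneg_left (monotone_gradientCutoff f x hkl) (hψ.nonneg x)) (norm_nonneg _)
  · by_cases hzero : ∇ f x = 0
    · simp [hzero]
    · refine tendsto_const_nhds.congr' ?_
      filter_upwards [eventually_one_le_mul_sq_norm_sub_one hzero] with k hk
      rw [gradientCutoff, Real.smoothTransition.one_of_one_le hk, mul_one]

theorem nodalIntegral_eq_gradientFlux {m : ℕ} [Fact (Module.finrank ℝ E = m + 1)]
    (hf : ContDiff ℝ 2 f) (hψ : IsTestFunction ψ) :
    nodalIntegral m f ψ = ENNReal.ofReal (gradientFlux f ψ) := by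
  refine tendsto_nhds_unique (tendsto_nodalIntegral_mul_gradientCutoff m hf hψ) ?_
  refine ((ENNReal.continuous_ofReal.tendsto _).comp
    (tendsto_gradientFlux_mul_gradientCutoff hf hψ)).congr fun k => ?_
  exact (nodalIntegral_eq_of_gradient_ne_zero hf (isTestFunction_mul_gradientCutoff hf hψ k)
    fun x hx => gradient_ne_zero_of_mem_tsupport_gradientCutoff (hf.of_le one_le_two)
      (tsupport_mul_subset_right hx)).symm

end FiniteDimensional

end GradientCutoff

section NodalFormula

variable {E : Type*} [NormedAddCommGroup E] [InnerProductSpace ℝ E] {f g χ : E → ℝ}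

lemma isTestFunction_mul_smoothAbs (hχ : IsTestFunction χ) (hg : ContDiff ℝ 1 g) {τ : ℝ}
    (hτ : τ ≠ 0) : IsTestFunction fun x => χ x * smoothAbs τ (g x) where
  contDiff := hχ.contDiff.mul ((contDiff_smoothAbs hτ).comp hg)
  hasCompactSupport := hχ.hasCompactSupport.mul_right
  nonneg x := mul_nonneg (hχ.nonneg x) (smoothAbs_nonneg τ _)

variable [FiniteDimensional ℝ E]

lemma divergence_mul_smoothAbs_smul (hf : ContDiff ℝ 2 f) (hg : ContDiff ℝ 1 g)
    (hχ : IsTestFunction χ) {τ : ℝ} (hτ : τ ≠ 0) (x : E) :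
    divergence (fun y => (χ y * smoothAbs τ (g y)) • ∇ f y) x =
      smoothAbs τ (g x) * divergence (fun y => χ y • ∇ f y) x +
        smoothSign τ (g x) * (χ x * fderiv ℝ g x (∇ f x)) := by
  have hderiv := (hasDerivAt_smoothAbs (g x) hτ).comp_hasFDerivAt x
    (hg.differentiable one_ne_zero x).hasFDerivAt
  have hfield := (hχ.contDiff_smul_gradient hf).differentiable one_ne_zero x
  have hdiv := divergence_smul hderiv.differentiableAt hfield
  rw [hderiv.fderiv] at hdiv
  simpa [smul_smul, mul_comm, mul_left_comm] using hdiv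

lemma sign_mul_divergence_mul_smul (hf : ContDiff ℝ 2 f) (hg : ContDiff ℝ 1 g)
    (hχ : IsTestFunction χ) (x : E) :
    Real.sign (g x) * divergence (fun y => (χ y * g y) • ∇ f y) x =
      |g x| * divergence (fun y => χ y • ∇ f y) x +
        Real.sign (g x) * (χ x * fderiv ℝ g x (∇ f x)) := by
  have hfield := (hχ.contDiff_smul_gradient hf).differentiable one_ne_zero x
  have hdiv := divergence_smul (hg.differentiable one_ne_zero x) hfield
  simp only [smul_smul, mul_comm (g _) (χ _), map_smul, smul_eq_mul] at hdiv
  rw [hdiv, mul_add, ← mul_assoc, sign_mul_self_eq_abs]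

variable [MeasurableSpace E] [BorelSpace E]

/-- `gradientFlux f (χ * |g|)`, with the derivative of `|g|` read off as `sign g • ∇ g`. -/
def absWeightedFlux (f g χ : E → ℝ) : ℝ :=
  -(1 / 2) * ∫ x, Real.sign (f x) *
    (Real.sign (g x) * divergence (fun y => (χ y * g y) • ∇ f y) x)

lemma tendsto_gradientFlux_mul_smoothAbs (hf : ContDiff ℝ 2 f) (hg : ContDiff ℝ 1 g)
    (hχ : IsTestFunction χ) :
    Tendsto (fun τ => gradientFlux f fun x => χ x * smoothAbs τ (g x)) (𝓝[≠] 0)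
      (𝓝 (absWeightedFlux f g χ)) := by
  have hgrad := continuous_gradient (hf.of_le one_le_two)
  have hfield := hχ.contDiff_smul_gradient hf
  refine Tendsto.const_mul _ (tendsto_integral_filter_of_dominated_convergence
    (fun x => |smoothAbs 1 (g x) * divergence (fun y => χ y • ∇ f y) x| +
      |χ x * fderiv ℝ g x (∇ f x)|) ?_ ?_ ?_ (Eventually.of_forall fun x => ?_))
  · filter_upwards [self_mem_nhdsWithin] with τ hτ
    exact (integrable_sign_mul hf.continuous.measurable (integrable_divergence
      ((isTestFunction_mul_smoothAbs hχ hg hτ).contDiff_smul_gradient hf)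
      hχ.hasCompactSupport.mul_right.smul_right)).aestronglyMeasurable
  · filter_upwards [self_mem_nhdsWithin, eventually_smoothAbs_le_smoothAbs_one] with τ hτ hle
    refine Eventually.of_forall fun x => ?_
    rw [Real.norm_eq_abs, abs_mul, divergence_mul_smoothAbs_smul hf hg hχ hτ]
    refine (mul_le_of_le_one_left (abs_nonneg _) (abs_sign_le_one _)).trans
      ((abs_add_le _ _).trans (add_le_add ?_ ?_))
    · rw [abs_mul, abs_mul, abs_of_nonneg (smoothAbs_nonneg _ _),
        abs_of_nonneg (smoothAbs_nonneg _ _)]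
      exact mul_le_mul_of_nonneg_right (hle _) (abs_nonneg _)
    · rw [abs_mul]
      exact mul_le_of_le_one_left (abs_nonneg _) (abs_smoothSign_le_one τ _)
  · have hone : Continuous fun x => smoothAbs 1 (g x) :=
      (contDiff_smoothAbs (k := 0) one_ne_zero).continuous.comp hg.continuous
    refine ((hone.mul (continuous_divergence hfield)).integrable_of_hasCompactSupport
      (hasCompactSupport_divergence hχ.hasCompactSupport.smul_right).mul_left).abs.add ?_
    exact ((hχ.contDiff.continuous.mul ((hg.continuous_fderiv one_ne_zero).clm_apply
      hgrad)).integrable_of_hasCompactSupport hχ.hasCompactSupport.mul_right).abs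
  · rw [sign_mul_divergence_mul_smul hf hg hχ]
    refine Tendsto.const_mul _ ?_
    refine Tendsto.congr' (eventually_mem_nhdsWithin.mono fun τ hτ =>
      (divergence_mul_smoothAbs_smul hf hg hχ hτ x).symm) ?_
    exact (((tendsto_smoothAbs _).mul_const _).add ((tendsto_smoothSign _).mul_const _)).mono_left
      nhdsWithin_le_nhds

variable {m : ℕ} [Fact (Module.finrank ℝ E = m + 1)]

lemma tendsto_nodalIntegral_mul_smoothAbs (hf : ContDiff ℝ 2 f) (hg : ContDiff ℝ 1 g)
    (hχ : IsTestFunction χ) :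
    Tendsto (fun τ => nodalIntegral m f fun x => χ x * smoothAbs τ (g x)) (𝓝[≠] 0)
      (𝓝 (nodalIntegral m f fun x => χ x * |g x|)) := by
  have hgrad := continuous_gradient (hf.of_le one_le_two)
  refine tendsto_lintegral_filter_of_dominated_convergence
    (fun x => ENNReal.ofReal (χ x * smoothAbs 1 (g x) * ‖∇ f x‖)) ?_ ?_ ?_
    (Eventually.of_forall fun x => ?_)
  · filter_upwards [self_mem_nhdsWithin] with τ hτ
    exact ((isTestFunction_mul_smoothAbs hχ hg hτ).contDiff.continuous.mul
      hgrad.norm).measurable.ennreal_ofReal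
  · filter_upwards [eventually_smoothAbs_le_smoothAbs_one] with τ hle
    refine Eventually.of_forall fun x => ENNReal.ofReal_le_ofReal ?_
    exact mul_le_mul_of_nonneg_right
      (mul_le_mul_of_nonneg_left (hle _) (hχ.nonneg x)) (norm_nonneg _)
  · exact (nodalIntegral_eq_gradientFlux hf
      (isTestFunction_mul_smoothAbs hχ hg one_ne_zero)).trans_ne ENNReal.ofReal_ne_top
  · exact (ENNReal.continuous_ofReal.tendsto _).comp
      ((((tendsto_smoothAbs _).mono_left nhdsWithin_le_nhds).const_mul _).mul_const _)

lemma nodalIntegral_mul_abs_eq (hf : ContDiff ℝ 2 f) (hg : ContDiff ℝ 1 g)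
    (hχ : IsTestFunction χ) :
    nodalIntegral m f (fun x => χ x * |g x|) = ENNReal.ofReal (absWeightedFlux f g χ) := by
  refine tendsto_nhds_unique (tendsto_nodalIntegral_mul_smoothAbs hf hg hχ) ?_
  refine Tendsto.congr' (eventually_mem_nhdsWithin.mono fun τ hτ =>
    (nodalIntegral_eq_gradientFlux hf (isTestFunction_mul_smoothAbs hχ hg hτ)).symm) ?_
  exact (ENNReal.continuous_ofReal.tendsto _).comp (tendsto_gradientFlux_mul_smoothAbs hf hg hχ)

lemma absWeightedFlux_nonneg (hf : ContDiff ℝ 2 f) (hg : ContDiff ℝ 1 g)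
    (hχ : IsTestFunction χ) :
    0 ≤ absWeightedFlux f g χ :=
  ge_of_tendsto (tendsto_gradientFlux_mul_smoothAbs hf hg hχ)
    (eventually_mem_nhdsWithin.mono fun _ hτ =>
      gradientFlux_nonneg hf (isTestFunction_mul_smoothAbs hχ hg hτ))

end NodalFormula

section Lattice

open Bornology Module ZSpan
open Submodule (span)

variable {ι E F : Type*} [NormedAddCommGroup E] [NormedSpace ℝ E]

/-- Invariance of `h` under translation by the lattice spanned by `b`, so that `h` descends to the
flat torus `E ⧸ span ℤ (range b)`. -/
def IsLatticePeriodic (b : Basis ι ℝ E) (h : E → F) : Prop :=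
  ∀ (l : span ℤ (range b)) (x : E), h (l +ᵥ x) = h x

/-- The sum over the lattice spanned by `b` of the translates of `η`. -/
def periodization (b : Basis ι ℝ E) (η : E → ℝ) (x : E) : ℝ :=
  ∑' l : span ℤ (range b), η (l +ᵥ x)

/-- A test function whose lattice translates sum to `1`; multiplication by `χ` turns integrals over
a fundamental domain of the torus into integrals over `E`. -/
structure IsLatticePartition (b : Basis ι ℝ E) (χ : E → ℝ) : Prop extends IsTestFunction χ where
  hasSum_vadd : ∀ x, HasSum (fun l : span ℤ (range b) => χ (l +ᵥ x)) 1

variable {b : Basis ι ℝ E} {η : E → ℝ}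

lemma isLatticePeriodic_periodization (η : E → ℝ) :
    IsLatticePeriodic b (periodization b η) := fun l x => by
  simp only [periodization, vadd_vadd]
  exact (Equiv.addRight l).tsum_eq fun k => η (k +ᵥ x)

lemma sum_divergence_smul_vadd {χ : E → ℝ} (hχ : IsLatticePartition b χ)
    {w : E → E} (hw : ContDiff ℝ 1 w)
    (hper : IsLatticePeriodic b w) {U : Set E} (hU : IsOpen U) {T : Finset (span ℤ (range b))}
    (hT : ∀ l ∉ T, ∀ x ∈ U, l +ᵥ x ∉ tsupport χ) {x : E} (hx : x ∈ U) :
    ∑ l ∈ T, divergence (fun y => χ y • w y) (l +ᵥ x) = divergence w x := by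
  have hχl (l : span ℤ (range b)) : ContDiff ℝ 1 fun y => χ (l +ᵥ y) :=
    hχ.contDiff.comp (contDiff_const.add contDiff_id)
  have hone : (fun y => ∑ l ∈ T, χ (l +ᵥ y) • w y) =ᶠ[𝓝 x] w := by
    filter_upwards [hU.mem_nhds hx] with y hy
    have hsum := (hasSum_sum_of_ne_finset_zero fun l hl =>
      image_eq_zero_of_notMem_tsupport (hT l hl y hy)).unique (hχ.hasSum_vadd y)
    rw [← Finset.sum_smul, hsum, one_smul]
  calc ∑ l ∈ T, divergence (fun y => χ y • w y) (l +ᵥ x)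
      = ∑ l ∈ T, divergence (fun y => χ (l +ᵥ y) • w y) x := by
        refine Finset.sum_congr rfl fun l _ => ?_
        have htranslate := divergence_comp_add_left (fun y => χ y • w y) l x
        simp only [← Submodule.vadd_def, ← vadd_eq_add, hper l _] at htranslate
        exact htranslate.symm
    _ = divergence (fun y => ∑ l ∈ T, χ (l +ᵥ y) • w y) x :=
        (divergence_sum fun l _ => ((hχl l).smul hw).differentiable one_ne_zero x).symm
    _ = divergence w x := by rw [divergence, hone.fderiv_eq, divergence]

variable [Finite ι] [FiniteDimensional ℝ E]

variable (b) in
lemma exists_finset_forall_vadd_notMem {U K : Set E} (hU : IsBounded U) (hK : IsBounded K) :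
    ∃ T : Finset (span ℤ (range b)), ∀ l ∉ T, ∀ x ∈ U, l +ᵥ x ∉ K := by
  have hfin := (setFinite_inter b (hK.sub hU)).preimage
    (Subtype.val_injective (p := (· ∈ span ℤ (range b)))).injOn
  refine ⟨hfin.toFinset, fun l hl x hx hlx => hl (hfin.mem_toFinset.2 ⟨?_, l.2⟩)⟩
  exact ⟨l +ᵥ x, hlx, x, hx, add_sub_cancel_right _ _⟩

variable (b) in
lemma exists_finset_forall_vadd_notMem_tsupport (hη : HasCompactSupport η) {U : Set E}
    (hU : IsBounded U) :
    ∃ T : Finset (span ℤ (range b)), ∀ l ∉ T, ∀ x ∈ U, l +ᵥ x ∉ tsupport η :=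
  exists_finset_forall_vadd_notMem b hU hη.isBounded

lemma summable_vadd (hη : HasCompactSupport η) (x : E) :
    Summable fun l : span ℤ (range b) => η (l +ᵥ x) := by
  obtain ⟨T, hT⟩ := exists_finset_forall_vadd_notMem_tsupport b hη (isBounded_singleton (x := x))
  exact summable_of_ne_finset_zero fun l hl => image_eq_zero_of_notMem_tsupport (hT l hl x rfl)

lemma contDiff_periodization {k : WithTop ℕ∞} (hη : ContDiff ℝ k η) (hηc : HasCompactSupport η) :
    ContDiff ℝ k (periodization b η) := by
  refine contDiff_iff_contDiffAt.2 fun x => ?_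
  obtain ⟨T, hT⟩ := exists_finset_forall_vadd_notMem_tsupport b hηc (Metric.isBounded_ball (x := x))
  have hsum : periodization b η =ᶠ[𝓝 x] fun y => ∑ l ∈ T, η (l +ᵥ y) := by
    filter_upwards [Metric.ball_mem_nhds x one_pos] with y hy
    exact tsum_eq_sum fun l hl => image_eq_zero_of_notMem_tsupport (hT l hl y hy)
  refine ContDiffAt.congr_of_eventuallyEq ?_ hsum
  exact (ContDiff.sum fun l _ => hη.comp (contDiff_const.add contDiff_id)).contDiffAt

lemma periodization_pos (hη : IsTestFunction η) (hpos : ∀ x ∈ fundamentalDomain b, 0 < η x)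
    (x : E) : 0 < periodization b η x := by
  obtain ⟨l, hl, -⟩ := exist_unique_vadd_mem_fundamentalDomain b x
  exact (summable_vadd hη.hasCompactSupport x).tsum_pos (fun k => hη.nonneg _) l (hpos _ hl)

variable (b) in
lemma exists_isLatticePartition : ∃ χ : E → ℝ, IsLatticePartition b χ := by
  obtain ⟨R, hR, hQ⟩ := (fundamentalDomain_isBounded b).subset_ball_lt 0 0
  let η : ContDiffBump (0 : E) := ⟨R, R + 1, hR, lt_add_one R⟩
  have hη : IsTestFunction η := ⟨η.contDiff, η.hasCompactSupport, fun _ => η.nonneg⟩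
  have hpos := periodization_pos hη fun x hx =>
    η.pos_of_mem_ball (Metric.ball_subset_ball (lt_add_one R).le (hQ hx))
  refine ⟨fun x => η x / periodization b η x, ⟨?_, ?_, ?_⟩, fun x => ?_⟩
  · exact hη.contDiff.div (contDiff_periodization hη.contDiff hη.hasCompactSupport)
      fun x => (hpos x).ne'
  · exact hη.hasCompactSupport.mul_right
  · exact fun x => div_nonneg (hη.nonneg x) (hpos x).le
  · simp only [isLatticePeriodic_periodization (η : E → ℝ) _ x]
    rw [← div_self (hpos x).ne']
    exact (summable_vadd hη.hasCompactSupport x).hasSum.div_const _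

end Lattice

section Unfolding

open Module ZSpan
open Submodule (span)

variable {ι E : Type*} [NormedAddCommGroup E] [MeasurableSpace E] [BorelSpace E]

instance vaddInvariantMeasure_submodule (L : Submodule ℤ E) (μ : Measure E) [μ.IsAddLeftInvariant] :
    VAddInvariantMeasure L E μ :=
  ⟨fun l s _ => measure_preimage_add μ l s⟩

section NormedSpace

variable [NormedSpace ℝ E] {b : Basis ι ℝ E} {χ : E → ℝ}

variable [Finite ι] [FiniteDimensional ℝ E]

lemma lintegral_ofReal_mul_of_isLatticePeriodic (hχ : IsLatticePartition b χ) {h : E → ℝ≥0∞}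
    (hper : IsLatticePeriodic b h) (hh : Measurable h) (μ : Measure E) [μ.IsAddLeftInvariant] :
    ∫⁻ x, ENNReal.ofReal (χ x) * h x ∂μ = ∫⁻ x in fundamentalDomain b, h x ∂μ := by
  have hχm (l : span ℤ (range b)) : Measurable fun x => ENNReal.ofReal (χ (l +ᵥ x)) :=
    (hχ.contDiff.continuous.measurable.comp (measurable_const_vadd l)).ennreal_ofReal
  simp only [(ZSpan.isAddFundamentalDomain b μ).lintegral_eq_tsum'', hper _ _]
  rw [← lintegral_tsum fun l => ((hχm l).fun_mul hh).aemeasurable]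
  refine lintegral_congr fun x => ?_
  simp only [ENNReal.tsum_mul_right,
    ← ENNReal.ofReal_tsum_of_nonneg (fun _ => hχ.nonneg _) (hχ.hasSum_vadd x).summable,
    (hχ.hasSum_vadd x).tsum_eq, ENNReal.ofReal_one, one_mul]

end NormedSpace

variable [InnerProductSpace ℝ E] [Finite ι] [FiniteDimensional ℝ E] {b : Basis ι ℝ E} {χ : E → ℝ}

lemma integral_mul_divergence_smul_of_isLatticePeriodic (hχ : IsLatticePartition b χ) {h : E → ℝ}
    (hh : Measurable h) {C : ℝ} (hC : ∀ x, |h x| ≤ C) (hper : IsLatticePeriodic b h)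
    {w : E → E} (hw : ContDiff ℝ 1 w) (hwper : IsLatticePeriodic b w) :
    ∫ x, h x * divergence (fun y => χ y • w y) x =
      ∫ x in fundamentalDomain b, h x * divergence w x := by
  obtain ⟨R, hQ⟩ := (fundamentalDomain_isBounded b).subset_ball 0
  obtain ⟨T, hT⟩ := exists_finset_forall_vadd_notMem_tsupport b hχ.hasCompactSupport
    (Metric.isBounded_ball (x := (0 : E)) (r := R))
  have hint : Integrable fun x => h x * divergence (fun y => χ y • w y) x :=
    (integrable_divergence (hχ.contDiff.smul hw) hχ.hasCompactSupport.smul_right).bdd_mul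
      hh.aestronglyMeasurable (Eventually.of_forall hC)
  have htranslate (l : span ℤ (range b)) :
      Integrable fun x => h (l +ᵥ x) * divergence (fun y => χ y • w y) (l +ᵥ x) :=
    (measurePreserving_vadd l volume).integrable_comp_of_integrable hint
  have hzero : ∀ l ∉ T, ∫ x in fundamentalDomain b,
      h (l +ᵥ x) * divergence (fun y => χ y • w y) (l +ᵥ x) = 0 := fun l hl => by
    refine setIntegral_eq_zero_of_forall_eq_zero fun x hx => ?_
    rw [divergence_of_notMem_tsupport, mul_zero]
    exact fun hl' => hT l hl x (hQ hx) (tsupport_smul_subset_left _ _ hl')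
  rw [(ZSpan.isAddFundamentalDomain b volume).integral_eq_tsum'' _ hint, tsum_eq_sum hzero,
    ← integral_finsetSum T fun l _ => (htranslate l).integrableOn]
  refine setIntegral_congr_fun (fundamentalDomain_measurableSet b) fun x hx => ?_
  simp only [hper _ x, ← Finset.mul_sum]
  rw [sum_divergence_smul_vadd hχ hw hwper Metric.isOpen_ball hT (hQ hx)]

end Unfolding

lemma setIntegral_euclideanHausdorffMeasure_inj {X : Type*} [EMetricSpace X]
    [MeasurableSpace X] [BorelSpace X] {d : ℕ} {f g : X → ℝ} {s t : Set X} :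
    ∫ x in s, f x ∂μHE[d] = ∫ x in t, g x ∂μHE[d] ↔
      ∫ x in s, f x ∂μH[d] = ∫ x in t, g x ∂μH[d] := by
  simp only [Measure.euclideanHausdorffMeasure_def, Measure.restrict_smul,
    integral_smul_nnreal_measure]
  exact smul_right_inj (Measure.addHaarScalarFactor_volume_hausdorffMeasure_ne_zero d)

section Torus

open InnerProductSpace Laplacian Module ZSpan

variable {ι E : Type*} [NormedAddCommGroup E] [InnerProductSpace ℝ E] [FiniteDimensional ℝ E]
  {f g : E → ℝ}

lemma laplacian_eq_sum_fderiv_fderiv [Fintype ι] (b : OrthonormalBasis ι ℝ E) {x : E}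
    (hf : DifferentiableAt ℝ (fderiv ℝ f) x) :
    Δ f x = ∑ i, fderiv ℝ (fun y => fderiv ℝ f y (b i)) x (b i) := by
  rw [laplacian_eq_iteratedFDeriv_orthonormalBasis f b]
  refine Finset.sum_congr rfl fun i _ => ?_
  rw [iteratedFDeriv_two_apply, fderiv_clm_apply hf (differentiableAt_const _)]
  simp

lemma divergence_gradient (hf : ContDiff ℝ 2 f) (x : E) : divergence (∇ f) x = Δ f x := by
  let b := stdOrthonormalBasis ℝ E
  have hgrad : DifferentiableAt ℝ (∇ f) x :=
    (contDiff_gradient hf one_add_one_eq_two.le).differentiable one_ne_zero x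
  have hderiv := (hf.fderiv_right one_add_one_eq_two.le).differentiable one_ne_zero x
  rw [divergence, LinearMap.trace_eq_sum_inner _ b, laplacian_eq_sum_fderiv_fderiv b hderiv]
  refine Finset.sum_congr rfl fun i _ => ?_
  have hinner (y : E) : fderiv ℝ f y (b i) = inner ℝ (b i) (∇ f y) := by
    rw [real_inner_comm, inner_gradient_left]
  simp only [hinner]
  rw [fderiv_inner_apply ℝ (differentiableAt_const _) hgrad]
  simp

lemma divergence_smul_gradient_comm (hf : ContDiff ℝ 2 f) (hg : ContDiff ℝ 2 g) {x : E}
    (hΔ : g x * Δ f x = f x * Δ g x) :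
    divergence (fun y => g y • ∇ f y) x = divergence (fun y => f y • ∇ g y) x := by
  have hdiff {u : E → ℝ} (hu : ContDiff ℝ 2 u) : DifferentiableAt ℝ u x ∧
      DifferentiableAt ℝ (∇ u) x :=
    ⟨hu.differentiable two_ne_zero x,
      (contDiff_gradient hu one_add_one_eq_two.le).differentiable one_ne_zero x⟩
  rw [divergence_smul (hdiff hg).1 (hdiff hf).2, divergence_smul (hdiff hf).1 (hdiff hg).2,
    divergence_gradient hf, divergence_gradient hg, hΔ, ← inner_gradient_left,
    ← inner_gradient_left, real_inner_comm]

variable {b : Basis ι ℝ E}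

lemma isLatticePeriodic_gradient (hf : IsLatticePeriodic b f) : IsLatticePeriodic b (∇ f) :=
  fun l x => by
    have htranslate := fderiv_comp_add_left (𝕜 := ℝ) (f := f) (l : E) (x := x)
    simp only [← Submodule.vadd_def, ← vadd_eq_add, hf l _] at htranslate
    rw [gradient, gradient, ← htranslate]

variable [Finite ι] [MeasurableSpace E] [BorelSpace E]

lemma absWeightedFlux_of_isLatticePartition {χ : E → ℝ} (hχ : IsLatticePartition b χ)
    (hf : ContDiff ℝ 2 f) (hg : ContDiff ℝ 1 g) (hfper : IsLatticePeriodic b f)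
    (hgper : IsLatticePeriodic b g) :
    absWeightedFlux f g χ = -(1 / 2) * ∫ x in fundamentalDomain b,
      Real.sign (f x) * Real.sign (g x) * divergence (fun y => g y • ∇ f y) x := by
  have hsign : Measurable fun x => Real.sign (f x) * Real.sign (g x) :=
    (measurable_sign.comp hf.continuous.measurable).mul
      (measurable_sign.comp hg.continuous.measurable)
  rw [← integral_mul_divergence_smul_of_isLatticePeriodic hχ hsign (C := 1)]
  · simp only [absWeightedFlux, smul_smul, mul_assoc]
  · intro x
    rw [abs_mul]
    exact mul_le_one₀ (abs_sign_le_one _) (abs_nonneg _) (abs_sign_le_one _)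
  · exact fun l x => by simp only [hfper l x, hgper l x]
  · exact hg.smul (contDiff_gradient hf one_add_one_eq_two.le)
  · exact fun l x => by simp only [hgper l x, isLatticePeriodic_gradient hfper l x]

lemma nodalIntegral_of_isLatticePartition {χ : E → ℝ} (hχ : IsLatticePartition b χ) (m : ℕ)
    (hf : ContDiff ℝ 1 f) (hg : Continuous g) (hfper : IsLatticePeriodic b f)
    (hgper : IsLatticePeriodic b g) :
    nodalIntegral m f (fun x => χ x * |g x|) =
      ∫⁻ x in {x ∈ fundamentalDomain b | f x = 0}, ENNReal.ofReal (|g x| * ‖∇ f x‖) ∂μHE[m] := by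
  have hnodal : MeasurableSet {x | f x = 0} :=
    (isClosed_singleton.preimage hf.continuous).measurableSet
  have hweight : Measurable fun x => ENNReal.ofReal (|g x| * ‖∇ f x‖) :=
    (hg.abs.mul (continuous_gradient hf).norm).measurable.ennreal_ofReal
  have hunfold := lintegral_ofReal_mul_of_isLatticePeriodic hχ
    (h := {x | f x = 0}.indicator fun x => ENNReal.ofReal (|g x| * ‖∇ f x‖))
    (fun l x => by
      simp only [indicator, mem_ofPred_eq, hfper l x, hgper l x,
        isLatticePeriodic_gradient hfper l x])
    (hweight.indicator hnodal) μHE[m]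
  simp only [← indicator_mul_right _ fun x => ENNReal.ofReal (χ x)] at hunfold
  rw [lintegral_indicator hnodal, setLIntegral_indicator hnodal] at hunfold
  rw [inter_comm] at hunfold
  simp only [nodalIntegral, mul_assoc, ENNReal.ofReal_mul (hχ.nonneg _)]
  exact hunfold

variable (b) in
theorem setIntegral_abs_mul_norm_gradient {m : ℕ} [Fact (finrank ℝ E = m + 1)]
    (hf : ContDiff ℝ 2 f) (hg : ContDiff ℝ 1 g) (hfper : IsLatticePeriodic b f)
    (hgper : IsLatticePeriodic b g) :
    ∫ x in {x ∈ fundamentalDomain b | f x = 0}, |g x| * ‖∇ f x‖ ∂μHE[m] =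
      -(1 / 2) * ∫ x in fundamentalDomain b,
        Real.sign (f x) * Real.sign (g x) * divergence (fun y => g y • ∇ f y) x := by
  obtain ⟨χ, hχ⟩ := exists_isLatticePartition b
  have hf' : ContDiff ℝ 1 f := hf.of_le one_le_two
  rw [integral_eq_lintegral_of_nonneg_ae
      (Eventually.of_forall fun x => mul_nonneg (abs_nonneg _) (norm_nonneg _))
      (hg.continuous.abs.mul (continuous_gradient hf').norm).aestronglyMeasurable,
    ← nodalIntegral_of_isLatticePartition hχ m hf' hg.continuous hfper hgper,
    nodalIntegral_mul_abs_eq hf hg hχ.toIsTestFunction,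
    ENNReal.toReal_ofReal (absWeightedFlux_nonneg hf hg hχ.toIsTestFunction),
    absWeightedFlux_of_isLatticePartition hχ hf hg hfper hgper]

theorem same_eigenvalue_symmetric_identity_general [Nontrivial E] (b : Basis ι ℝ E)
    (hf : ContDiff ℝ 2 f) (hfper : IsLatticePeriodic b f)
    (hg : ContDiff ℝ 2 g) (hgper : IsLatticePeriodic b g) (hΔ : ∀ x, g x * Δ f x = f x * Δ g x) :
    ∫ x in {x ∈ fundamentalDomain b | f x = 0}, |g x| * ‖∇ f x‖ ∂μH[(finrank ℝ E : ℝ) - 1] =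
      ∫ x in {x ∈ fundamentalDomain b | g x = 0}, |f x| * ‖∇ g x‖ ∂μH[(finrank ℝ E : ℝ) - 1] := by
  obtain ⟨m, hm⟩ := Nat.exists_eq_add_one_of_ne_zero (finrank_pos (R := ℝ) (M := E)).ne'
  have : Fact (finrank ℝ E = m + 1) := ⟨hm⟩
  rw [hm, Nat.cast_add_one, add_sub_cancel_right, ← setIntegral_euclideanHausdorffMeasure_inj,
    setIntegral_abs_mul_norm_gradient b hf (hg.of_le one_le_two) hfper hgper,
    setIntegral_abs_mul_norm_gradient b hg (hf.of_le one_le_two) hgper hfper]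
  simp only [divergence_smul_gradient_comm hf hg (hΔ _), mul_comm (Real.sign (f _))]

end Torus

section EuclideanTorus

open InnerProductSpace Laplacian Module ZSpan

variable {n : ℕ} {φ : EuclideanSpace ℝ (Fin n) → ℝ}

lemma fundamentalDomain_basisFun_eq_Qcube (n : ℕ) :
    fundamentalDomain (EuclideanSpace.basisFun (Fin n) ℝ).toBasis = Qcube n := by
  ext x
  simp [Qcube, mem_fundamentalDomain]

lemma ZPeriodic.isLatticePeriodic (hφ : ZPeriodic φ) :
    IsLatticePeriodic (EuclideanSpace.basisFun (Fin n) ℝ).toBasis φ := fun l x => by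
  choose k hk using (Basis.mem_span_iff_repr_mem ℤ
    (EuclideanSpace.basisFun (Fin n) ℝ).toBasis (l : EuclideanSpace ℝ (Fin n))).1 l.2
  rw [← hφ x k, Submodule.vadd_def, vadd_eq_add, add_comm]
  congr 2
  ext i
  simpa using (hk i).symm

lemma lap_eq_laplacian (hφ : ContDiff ℝ 2 φ) (x : EuclideanSpace ℝ (Fin n)) :
    lap φ x = Δ φ x := by
  have hderiv := (hφ.fderiv_right one_add_one_eq_two.le).differentiable one_ne_zero x
  simp [lap, laplacian_eq_sum_fderiv_fderiv (EuclideanSpace.basisFun (Fin n) ℝ) hderiv]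

end EuclideanTorus

theorem same_eigenvalue_symmetric_identity (n : ℕ) (hn : 2 ≤ n)
    (φj φk : EuclideanSpace ℝ (Fin n) → ℝ)
    (hφj : ContDiff ℝ (⊤ : ℕ∞) φj) (hperj : ZPeriodic φj)
    (hφk : ContDiff ℝ (⊤ : ℕ∞) φk) (hperk : ZPeriodic φk)
    (lam : ℝ) (hlam : 0 < lam)
    (heigj : ∀ x, lap φj x = -lam ^ 2 * φj x)
    (heigk : ∀ x, lap φk x = -lam ^ 2 * φk x) :
    ∫ x in {x ∈ Qcube n | φj x = 0}, |φk x| * ‖gradient φj x‖ ∂μH[(n : ℝ) - 1] =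
      ∫ x in {x ∈ Qcube n | φk x = 0}, |φj x| * ‖gradient φk x‖ ∂μH[(n : ℝ) - 1] := by
  have : NeZero n := ⟨by omega⟩
  have hj : ContDiff ℝ 2 φj := mod_cast contDiff_infty.1 hφj 2
  have hk : ContDiff ℝ 2 φk := mod_cast contDiff_infty.1 hφk 2
  simpa only [fundamentalDomain_basisFun_eq_Qcube, finrank_euclideanSpace_fin] using
    same_eigenvalue_symmetric_identity_general (EuclideanSpace.basisFun (Fin n) ℝ).toBasis
      hj hperj.isLatticePeriodic hk hperk.isLatticePeriodic fun x => by
        rw [← lap_eq_laplacian hj, ← lap_eq_laplacian hk, heigj, heigk]; ring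
end
end

section
/- There exists a constant C > 0, depending only on n, such that for every λ > 0, every smooth ℤⁿ-periodic φ : ℝⁿ → ℝ with Δφ = −λ²φ and ∫_Q φ(x)² dx = 1, and every c > 0: μH^{n−1}(N_φ^c) + μH^{n−1}(N_φ^{−c}) ≥ C λ^{(3−n)/2} ∫_{{x ∈ Q : |φ(x)| ≥ c}} |φ(x)| dx. -/
/-!
Integrate `λ²φ = -∑ᵢ ∂ᵢ∂ᵢφ` over `{φ ≥ c}`. A line in the direction `eᵢ` meets `{φ ≥ c}` in
intervals whose endpoints lie on the level set, so by the fundamental theorem of calculus the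
integral of `∂ᵢ∂ᵢφ` over this part of a period is at most `4 sup |∂ᵢφ|` times the number of points
of `{φ = c}` there; if there is no such point, the integral vanishes by periodicity. Eilenberg's
inequality bounds the integral of this number over all lines by `μH^{n-1}(φ = c)`, and hence
`λ² ∫_{φ ≥ c} φ ≤ 4n maxᵢ sup |∂ᵢφ| · μH^{n-1}(φ = c)`. The same holds for `-φ`.

The gradient is bounded by Fourier analysis: the coefficients of `φ` are supported on the lattice
points of the sphere of radius `λ/2π`, of which there are at most `2λⁿ⁻¹`, so Cauchy–Schwarz and
Parseval give `|∂ᵢφ|² ≤ 2λⁿ⁻¹ ∫ |∂ᵢφ|² ≤ 2λⁿ⁺¹`.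
-/

open MeasureTheory Real Set

noncomputable section

section Multiplicity

open Filter MeasurableSpace
open scoped ENNReal Topology

variable {X Y : Type*} [MeasurableSpace X] [CountablyGenerated X] [MeasurableSpace Y]
  {μ : Measure X} {ν : Measure Y} {f : X → Y}

/-- The `k`-th approximation from below of the multiplicity function `y ↦ #(N ∩ f⁻¹{y})`: the number
of cells of the `k`-th countable partition whose intersection with `N` has an image containing `y`.
The images are replaced by measurable hulls to make the function measurable. -/
def cellMultiplicity (ν : Measure Y) (f : X → Y) (N : Set X) (k : ℕ) (y : Y) :
    ℝ≥0∞ :=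
  ∑ s ∈ (finite_countablePartition X k).toFinset, (toMeasurable ν (f '' (N ∩ s))).indicator 1 y

lemma measurable_cellMultiplicity (N : Set X) (k : ℕ) : Measurable (cellMultiplicity ν f N k) :=
  Finset.measurable_fun_sum _ fun _ _ =>
    measurable_one.indicator (measurableSet_toMeasurable _ _)

lemma lintegral_cellMultiplicity_le (hf : ∀ s, ν (f '' s) ≤ μ s) (N : Set X) (k : ℕ) :
    ∫⁻ y, cellMultiplicity ν f N k y ∂ν ≤ μ N := by
  have hP := fun s => (finite_countablePartition X k).mem_toFinset (a := s)
  calc ∫⁻ y, cellMultiplicity ν f N k y ∂ν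
      = ∑ s ∈ (finite_countablePartition X k).toFinset, ν (f '' (N ∩ s)) := by
        unfold cellMultiplicity
        rw [lintegral_finsetSum _ fun s _ =>
          measurable_one.indicator (measurableSet_toMeasurable _ _)]
        simp only [lintegral_indicator_one (measurableSet_toMeasurable _ _), measure_toMeasurable]
    _ ≤ ∑ s ∈ (finite_countablePartition X k).toFinset, μ.restrict N s := by
        refine Finset.sum_le_sum fun s hs => ?_
        rw [Measure.restrict_apply (measurableSet_countablePartition k ((hP s).1 hs)), inter_comm s]
        exact hf _
    _ ≤ μ.restrict N univ := sum_measure_le_measure_univ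
        (fun s hs => (measurableSet_countablePartition k ((hP s).1 hs)).nullMeasurableSet)
        fun s hs t ht hst =>
          (disjoint_countablePartition ((hP s).1 hs) ((hP t).1 ht) hst).aedisjoint
    _ = μ N := Measure.restrict_apply_univ N

lemma card_le_cellMultiplicity {N : Set X} {y : Y} {k : ℕ} {F : Finset X}
    (hF : (F : Set X) ⊆ N ∩ f ⁻¹' {y}) (hk : InjOn (countablePartitionSet k) (F : Set X)) :
    (F.card : ℝ≥0∞) ≤ cellMultiplicity ν f N k y := by
  classical
  have hmem : ∀ x ∈ F, y ∈ toMeasurable ν (f '' (N ∩ countablePartitionSet k x)) := fun x hx =>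
    subset_toMeasurable _ _ ⟨x, ⟨(hF hx).1, mem_countablePartitionSet k x⟩, (hF hx).2⟩
  calc (F.card : ℝ≥0∞)
      = ∑ x ∈ F, (toMeasurable ν (f '' (N ∩ countablePartitionSet k x))).indicator 1 y := by
        simp +contextual [hmem]
    _ = ∑ s ∈ F.image (countablePartitionSet k),
          (toMeasurable ν (f '' (N ∩ s))).indicator 1 y := by
        rw [Finset.sum_image hk]
    _ ≤ cellMultiplicity ν f N k y := Finset.sum_le_sum_of_subset fun s hs => by
        obtain ⟨x, -, rfl⟩ := Finset.mem_image.1 hs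
        exact (finite_countablePartition X k).mem_toFinset.2 (countablePartitionSet_mem k x)

variable [SeparatesPoints X]

lemma exists_countablePartition_mem_notMem {x y : X} (hxy : x ≠ y) :
    ∃ k, ∃ s ∈ countablePartition X k, ¬(x ∈ s ↔ y ∈ s) := by
  have : @SeparatesPoints X (generateFrom (⋃ k, countablePartition X k)) := by
    rwa [generateFrom_iUnion_countablePartition]
  by_contra! h
  refine hxy (separating_of_generateFrom (⋃ k, countablePartition X k) x y fun s hs => ?_)
  obtain ⟨k, hk⟩ := mem_iUnion.1 hs
  exact h k s hk

lemma eventually_countablePartitionSet_ne {x y : X} (hxy : x ≠ y) :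
    ∀ᶠ k in atTop, countablePartitionSet k x ≠ countablePartitionSet k y := by
  obtain ⟨n, s, hs, hne⟩ := exists_countablePartition_mem_notMem hxy
  filter_upwards [eventually_ge_atTop n] with k hk heq
  have hmono : Monotone fun k => generateFrom (countablePartition X k) :=
    monotone_nat_of_le_succ (generateFrom_countablePartition_le_succ X)
  obtain ⟨S, hS, rfl⟩ := (measurableSet_generateFrom_countablePartition_iff k s).1
    (hmono hk s (measurableSet_generateFrom hs))
  refine hne (exists_congr fun t => and_congr_right fun ht => ?_)
  rw [← countablePartitionSet_eq_iff x (hS ht), heq, countablePartitionSet_eq_iff y (hS ht)]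

lemma eventually_injOn_countablePartitionSet (F : Finset X) :
    ∀ᶠ k in atTop, InjOn (countablePartitionSet k) (F : Set X) := by
  have h : ∀ x ∈ F, ∀ y ∈ F, ∀ᶠ k in atTop,
      countablePartitionSet k x = countablePartitionSet k y → x = y := fun x _ y _ => by
    rcases eq_or_ne x y with rfl | hxy
    · exact .of_forall fun _ _ => rfl
    · exact (eventually_countablePartitionSet_ne hxy).mono fun k hk heq => absurd heq hk
  simp only [← Finset.eventually_all] at h
  exact h.mono fun k hk x hx y hy => hk x hx y hy

lemma encard_fiber_le_liminf_cellMultiplicity (N : Set X) (y : Y) :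
    ((N ∩ f ⁻¹' {y}).encard : ℝ≥0∞) ≤ liminf (fun k => cellMultiplicity ν f N k y) atTop := by
  rw [← ENNReal.tsum_set_one, ENNReal.tsum_eq_iSup_sum]
  refine iSup_le fun F => le_liminf_of_le (h := ?_)
  filter_upwards [eventually_injOn_countablePartitionSet (F.map (.subtype _))] with k hk
  simpa using card_le_cellMultiplicity (ν := ν)
    (fun _ => F.property_of_mem_map_subtype) hk

/-- **Eilenberg's inequality** for the counting measure of the fibres. -/
lemma lintegral_encard_fiber_le (hf : ∀ s, ν (f '' s) ≤ μ s) (N : Set X) :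
    ∫⁻ y, ((N ∩ f ⁻¹' {y}).encard : ℝ≥0∞) ∂ν ≤ μ N :=
  calc ∫⁻ y, ((N ∩ f ⁻¹' {y}).encard : ℝ≥0∞) ∂ν
      ≤ ∫⁻ y, liminf (fun k => cellMultiplicity ν f N k y) atTop ∂ν :=
        lintegral_mono fun y => encard_fiber_le_liminf_cellMultiplicity N y
    _ ≤ liminf (fun k => ∫⁻ y, cellMultiplicity ν f N k y ∂ν) atTop :=
        lintegral_liminf_le fun k => measurable_cellMultiplicity N k
    _ ≤ μ N := (liminf_le_liminf (.of_forall fun k => lintegral_cellMultiplicity_le hf N k)).trans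
        (by simp)

end Multiplicity

section IntervalIntegral

open scoped ENNReal

variable {F : Type*} [NormedAddCommGroup F]
  {f : ℝ → ℝ} {g g' : ℝ → F} {a b c G : ℝ}

lemma intervalIntegrable_indicator_superlevel (hf : Continuous f) (hg' : Continuous g') (a b : ℝ) :
    IntervalIntegrable ({t | c ≤ f t}.indicator g') volume a b := by
  rw [intervalIntegrable_iff]
  exact (intervalIntegrable_iff.1 (hg'.intervalIntegrable a b)).indicator
    (isClosed_le continuous_const hf).measurableSet

variable [NormedSpace ℝ F] [CompleteSpace F]

lemma intervalIntegral_indicator_superlevel_eq_zero_or (hab : a ≤ b) (hf : Continuous f)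
    (hg : ∀ t, HasDerivAt g (g' t) t) (hg' : Continuous g') (hne : ∀ t ∈ Ioo a b, f t ≠ c) :
    ∫ t in a..b, {t | c ≤ f t}.indicator g' t = 0 ∨
      ∫ t in a..b, {t | c ≤ f t}.indicator g' t = g b - g a := by
  have hcongr : ∀ h : ℝ → F, (∀ t ∈ Ioo a b, {t | c ≤ f t}.indicator g' t = h t) →
      ∫ t in a..b, {t | c ≤ f t}.indicator g' t = ∫ t in a..b, h t := fun h hh => by
    simp only [intervalIntegral.integral_of_le hab, integral_Ioc_eq_integral_Ioo]
    exact setIntegral_congr_fun measurableSet_Ioo hh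
  by_cases hlt : ∃ t ∈ Ioo a b, f t < c
  · obtain ⟨t, ht, htc⟩ := hlt
    refine .inl ((hcongr 0 fun s hs => indicator_of_notMem (fun hsc => ?_) _).trans (by simp))
    obtain ⟨r, hr, hrc⟩ :=
      isPreconnected_Ioo.intermediate_value ht hs hf.continuousOn ⟨htc.le, hsc⟩
    exact hne r hr hrc
  · push Not at hlt
    exact .inr ((hcongr g' fun s hs =>
      indicator_of_mem (s := {t | c ≤ f t}) (hlt s hs) _).trans
      (intervalIntegral.integral_eq_sub_of_hasDerivAt (fun t _ => hg t)
        (hg'.intervalIntegrable a b)))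

lemma norm_intervalIntegral_indicator_superlevel_le_of_forall_ne (hab : a ≤ b) (hf : Continuous f)
    (hg : ∀ t, HasDerivAt g (g' t) t) (hg' : Continuous g') (hG : ∀ t, ‖g t‖ ≤ G)
    (hne : ∀ t ∈ Ioo a b, f t ≠ c) :
    ‖∫ t in a..b, {t | c ≤ f t}.indicator g' t‖ ≤ 2 * G := by
  rcases intervalIntegral_indicator_superlevel_eq_zero_or hab hf hg hg' hne with h | h <;> rw [h]
  · linarith [norm_zero (E := F), (norm_nonneg _).trans (hG a)]
  · linarith [norm_sub_le (g b) (g a), hG a, hG b]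

lemma norm_intervalIntegral_indicator_superlevel_le (hab : a ≤ b) (hf : Continuous f)
    (hg : ∀ t, HasDerivAt g (g' t) t) (hg' : Continuous g') (hG : ∀ t, ‖g t‖ ≤ G)
    (Z : Finset ℝ) (hZ : ∀ t ∈ Ioo a b, f t = c → t ∈ Z) :
    ‖∫ t in a..b, {t | c ≤ f t}.indicator g' t‖ ≤ 2 * G * (Z.card + 1) := by
  have hG0 : 0 ≤ G := (norm_nonneg _).trans (hG a)
  induction Z using Finset.induction_on_max generalizing b with
  | empty =>
    simpa using norm_intervalIntegral_indicator_superlevel_le_of_forall_ne hab hf hg hg' hG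
      (by simpa using hZ)
  | insert z Z hmax ih =>
    rw [Finset.card_insert_of_notMem fun h => lt_irrefl z (hmax z h)]
    push_cast
    by_cases hz : z ∈ Ioo a b
    · rw [← intervalIntegral.integral_add_adjacent_intervals
        (intervalIntegrable_indicator_superlevel hf hg' a z)
        (intervalIntegrable_indicator_superlevel hf hg' z b)]
      have hleft := ih hz.1.le fun t ht htc => (Finset.mem_insert.1
        (hZ t ⟨ht.1, ht.2.trans hz.2⟩ htc)).resolve_left ht.2.ne
      have hright := norm_intervalIntegral_indicator_superlevel_le_of_forall_ne (c := c) hz.2.le hf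
        hg hg' hG fun t ht htc => by
          rcases Finset.mem_insert.1 (hZ t ⟨hz.1.trans ht.1, ht.2⟩ htc) with rfl | h
          · exact ht.1.false
          · exact (hmax t h).not_gt ht.1
      linarith [norm_add_le (∫ t in a..z, {t | c ≤ f t}.indicator g' t)
        (∫ t in z..b, {t | c ≤ f t}.indicator g' t)]
    · have := ih hab fun t ht htc => (Finset.mem_insert.1 (hZ t ht htc)).resolve_left
        fun h => hz (h ▸ ht)
      linarith

lemma enorm_intervalIntegral_indicator_superlevel_le_encard (hab : a ≤ b) (hf : Continuous f)
    (hg : ∀ t, HasDerivAt g (g' t) t) (hg' : Continuous g') (hG0 : 0 < G) (hG : ∀ t, ‖g t‖ ≤ G)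
    (hgab : g a = g b) :
    ‖∫ t in a..b, {t | c ≤ f t}.indicator g' t‖ₑ ≤
      ENNReal.ofReal (4 * G) * ({t ∈ Ico a b | f t = c}.encard : ℝ≥0∞) := by
  rcases Set.finite_or_infinite {t ∈ Ico a b | f t = c} with hfin | hinf
  swap
  · rw [hinf.encard_eq, ENat.toENNReal_top, ENNReal.mul_top (by simpa using hG0)]
    exact le_top
  have hZ : ∀ t ∈ Ioo a b, f t = c → t ∈ hfin.toFinset := fun t ht htc =>
    hfin.mem_toFinset.2 ⟨Ioo_subset_Ico_self ht, htc⟩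
  rcases hfin.toFinset.eq_empty_or_nonempty with hempty | hne
  · rw [hempty] at hZ
    rcases intervalIntegral_indicator_superlevel_eq_zero_or hab hf hg hg'
      (fun t ht htc => by simpa using hZ t ht htc) with h | h <;> simp [h, hgab]
  · have hcard : (1 : ℝ) ≤ hfin.toFinset.card := by exact_mod_cast hne.card_pos
    have := norm_intervalIntegral_indicator_superlevel_le hab hf hg hg' hG _ hZ
    rw [hfin.encard_eq_coe_toFinset_card, ENat.toENNReal_coe, ← ofReal_norm,
      ← ENNReal.ofReal_natCast, ← ENNReal.ofReal_mul (by positivity)]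
    exact ENNReal.ofReal_le_ofReal (by nlinarith)

end IntervalIntegral

open scoped ENNReal

local notation "𝔼" n:max => EuclideanSpace ℝ (Fin n)

section Cube

variable {n : ℕ}

lemma toLp_preimage_Qcube : WithLp.toLp 2 ⁻¹' Qcube n = univ.pi fun _ => Ico (0 : ℝ) 1 := by
  ext x
  simp [Qcube]

lemma isBounded_Qcube : Bornology.IsBounded (Qcube n) := by
  have h : Bornology.IsBounded (univ.pi fun _ : Fin n => Ico (0 : ℝ) 1) :=
    .pi fun _ => Metric.isBounded_Ico 0 1
  refine ((PiLp.lipschitzWith_toLp 2 _).isBounded_image h).subset fun x hx => ?_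
  exact ⟨x.ofLp, fun i _ => hx i, rfl⟩

lemma integrableOn_Qcube {F : Type*} [NormedAddCommGroup F] {f : 𝔼 n → F} (hf : Continuous f) :
    IntegrableOn f (Qcube n) :=
  (hf.continuousOn.integrableOn_compact isBounded_Qcube.isCompact_closure).mono_set subset_closure

end Cube

section Slice

variable {n : ℕ} {F : Type*} [NormedAddCommGroup F] [NormedSpace ℝ F]

/-- The partial derivative `∂ᵢf`, encoded as in `lap`: the Fréchet derivative applied to `eᵢ`. -/
def partialDeriv (i : Fin n) (f : 𝔼 n → F) (x : 𝔼 n) : F :=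
  fderiv ℝ f x (EuclideanSpace.single i 1)

lemma continuous_partialDeriv {f : 𝔼 n → F} (hf : ContDiff ℝ 1 f) (i : Fin n) :
    Continuous (partialDeriv i f) :=
  (hf.continuous_fderiv one_ne_zero).clm_apply continuous_const

variable {m : ℕ}

/-- The point of `ℝᵐ⁺¹` with `i`-th coordinate `t` and remaining coordinates `y`; as `t` varies it
runs through the line over `y` in the direction `eᵢ`. -/
def insertCoord (i : Fin (m + 1)) (t : ℝ) (y : Fin m → ℝ) : 𝔼 (m + 1) :=
  WithLp.toLp 2 (i.insertNth t y)

lemma insertCoord_eq_add_smul (i : Fin (m + 1)) (t : ℝ) (y : Fin m → ℝ) :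
    insertCoord i t y = insertCoord i 0 y + t • EuclideanSpace.single i 1 := by
  ext j
  refine Fin.succAboveCases i ?_ (fun k => ?_) j <;> simp [insertCoord]

lemma insertCoord_mem_Qcube {i : Fin (m + 1)} {t : ℝ} {y : Fin m → ℝ} :
    insertCoord i t y ∈ Qcube (m + 1) ↔ t ∈ Ico 0 1 ∧ y ∈ univ.pi fun _ => Ico 0 1 := by
  simp only [Qcube, insertCoord, mem_ofPred_eq, i.forall_iff_succAbove, Fin.insertNth_apply_same,
    Fin.insertNth_apply_succAbove, mem_univ_pi]

lemma hasDerivAt_insertCoord (i : Fin (m + 1)) (t : ℝ) (y : Fin m → ℝ) :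
    HasDerivAt (fun t => insertCoord i t y) (EuclideanSpace.single i 1) t := by
  rw [funext fun t => insertCoord_eq_add_smul i t y]
  simpa using ((hasDerivAt_id t).smul_const (EuclideanSpace.single i (1 : ℝ))).const_add
    (insertCoord i 0 y)

lemma continuous_insertCoord (i : Fin (m + 1)) (y : Fin m → ℝ) :
    Continuous fun t => insertCoord i t y :=
  continuous_iff_continuousAt.2 fun t => (hasDerivAt_insertCoord i t y).continuousAt

lemma hasDerivAt_comp_insertCoord {f : 𝔼 (m + 1) → F} (hf : Differentiable ℝ f)
    (i : Fin (m + 1)) (t : ℝ) (y : Fin m → ℝ) :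
    HasDerivAt (fun t => f (insertCoord i t y)) (partialDeriv i f (insertCoord i t y)) t :=
  (hf _).hasFDerivAt.comp_hasDerivAt t (hasDerivAt_insertCoord i t y)

lemma apply_insertCoord_zero_eq_one {α : Type*} {f : 𝔼 (m + 1) → α} {i : Fin (m + 1)}
    (hper : Function.Periodic f (EuclideanSpace.single i 1)) (y : Fin m → ℝ) :
    f (insertCoord i 0 y) = f (insertCoord i 1 y) := by
  rw [insertCoord_eq_add_smul i 1, one_smul, hper]

lemma setIntegral_Qcube_eq_integral_insertCoord (i : Fin (m + 1)) {f : 𝔼 (m + 1) → F}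
    (hf : IntegrableOn f (Qcube (m + 1))) :
    ∫ x in Qcube (m + 1), f x =
      ∫ y in univ.pi fun _ => Ico (0 : ℝ) 1, ∫ t in 0..1, f (insertCoord i t y) := by
  let e := (MeasurableEquiv.piFinSuccAbove (fun _ => ℝ) i).symm.trans (MeasurableEquiv.toLp 2 _)
  have he : MeasurePreserving e (volume.prod volume) volume :=
    (PiLp.volume_preserving_toLp (Fin (m + 1))).comp
      (volume_preserving_piFinSuccAbove (fun _ => ℝ) i).symm
  have hpre : e ⁻¹' Qcube (m + 1) = Ico 0 1 ×ˢ univ.pi fun _ => Ico 0 1 := by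
    ext ⟨t, y⟩
    exact insertCoord_mem_Qcube
  rw [← he.setIntegral_preimage_emb e.measurableEmbedding, hpre]
  rw [← he.integrableOn_comp_preimage e.measurableEmbedding, hpre] at hf
  rw [← Measure.prod_restrict, integral_prod_symm _ (by rwa [Measure.prod_restrict])]
  simp only [intervalIntegral.integral_of_le zero_le_one, integral_Ico_eq_integral_Ioc]
  rfl

lemma volume_image_removeNth_le (i : Fin (m + 1)) (s : Set (𝔼 (m + 1))) :
    volume ((fun x j => x (i.succAbove j)) '' s) ≤ μH[m] s := by
  have hlip : LipschitzWith 1 fun (x : 𝔼 (m + 1)) (j : Fin m) => x (i.succAbove j) :=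
    LipschitzWith.of_dist_le_mul fun x y => by
      rw [NNReal.coe_one, one_mul, dist_pi_le_iff dist_nonneg]
      exact fun j => PiLp.dist_apply_le x y _
  simpa [← hausdorffMeasure_pi_real] using
    hlip.hausdorffMeasure_image_le (Nat.cast_nonneg m) s

lemma lintegral_encard_insertCoord_mem_le (i : Fin (m + 1)) (N : Set (𝔼 (m + 1))) :
    ∫⁻ y, ({t | insertCoord i t y ∈ N}.encard : ℝ≥0∞) ≤ μH[m] N := by
  refine (lintegral_mono fun y => ENat.toENNReal_le.2 ?_).trans
    (lintegral_encard_fiber_le (volume_image_removeNth_le i) N)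
  refine encard_le_encard_of_injOn (f := fun t => insertCoord i t y) (fun t ht => ⟨ht, ?_⟩) ?_
  · ext j; simp [insertCoord]
  · intro s _ t _ hst
    simpa [insertCoord] using congrArg (fun x : 𝔼 (m + 1) => x i) hst

end Slice

section Superlevel

variable {m : ℕ} {F : Type*} [NormedAddCommGroup F] [NormedSpace ℝ F] [CompleteSpace F]
  {ψ : 𝔼 (m + 1) → F} {i : Fin (m + 1)}

lemma setIntegral_partialDeriv_eq_zero (hψ : ContDiff ℝ 1 ψ)
    (hper : Function.Periodic ψ (EuclideanSpace.single i 1)) :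
    ∫ x in Qcube (m + 1), partialDeriv i ψ x = 0 := by
  have hint := integrableOn_Qcube (continuous_partialDeriv hψ i)
  have hline : ∀ y, ∫ t in 0..1, partialDeriv i ψ (insertCoord i t y) = 0 := fun y => by
    rw [intervalIntegral.integral_eq_sub_of_hasDerivAt
      (fun t _ => hasDerivAt_comp_insertCoord (hψ.differentiable one_ne_zero) i t y)
      (((continuous_partialDeriv hψ i).comp (continuous_insertCoord i y)).intervalIntegrable 0 1),
      apply_insertCoord_zero_eq_one hper, sub_self]
  rw [setIntegral_Qcube_eq_integral_insertCoord i hint]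
  simp only [hline, integral_zero]

lemma enorm_setIntegral_partialDeriv_superlevel_le {φ : 𝔼 (m + 1) → ℝ} {G : ℝ} (hφ : Continuous φ)
    (hψ : ContDiff ℝ 1 ψ) (hper : Function.Periodic ψ (EuclideanSpace.single i 1)) (hG0 : 0 < G)
    (hG : ∀ x, ‖ψ x‖ ≤ G) (c : ℝ) :
    ‖∫ x in {x ∈ Qcube (m + 1) | c ≤ φ x}, partialDeriv i ψ x‖ₑ ≤
      ENNReal.ofReal (4 * G) * μH[m] {x ∈ Qcube (m + 1) | φ x = c} := by
  have hmeas : MeasurableSet {x | c ≤ φ x} := (isClosed_le continuous_const hφ).measurableSet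
  have hcont := continuous_partialDeriv hψ i
  have hslice : ∀ y ∈ univ.pi fun _ => Ico (0 : ℝ) 1,
      ‖∫ t in 0..1, {x | c ≤ φ x}.indicator (partialDeriv i ψ) (insertCoord i t y)‖ₑ ≤
        ENNReal.ofReal (4 * G) *
          ({t | insertCoord i t y ∈ {x ∈ Qcube (m + 1) | φ x = c}}.encard : ℝ≥0∞) := fun y hy => by
    have hset : {t | insertCoord i t y ∈ {x ∈ Qcube (m + 1) | φ x = c}} =
        {t ∈ Ico 0 1 | φ (insertCoord i t y) = c} := by
      ext t
      simp only [mem_ofPred_eq, insertCoord_mem_Qcube, hy, and_true]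
    rw [hset]
    exact enorm_intervalIntegral_indicator_superlevel_le_encard zero_le_one
      (hφ.comp (continuous_insertCoord i y))
      (fun t => hasDerivAt_comp_insertCoord (hψ.differentiable one_ne_zero) i t y)
      (hcont.comp (continuous_insertCoord i y)) hG0 (fun t => hG _)
      (apply_insertCoord_zero_eq_one hper y)
  calc ‖∫ x in {x ∈ Qcube (m + 1) | c ≤ φ x}, partialDeriv i ψ x‖ₑ
      = ‖∫ y in univ.pi fun _ => Ico (0 : ℝ) 1, ∫ t in 0..1,
          {x | c ≤ φ x}.indicator (partialDeriv i ψ) (insertCoord i t y)‖ₑ := by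
        rw [← setIntegral_Qcube_eq_integral_insertCoord i
          ((integrableOn_Qcube hcont).indicator hmeas), setIntegral_indicator hmeas]
        rfl
    _ ≤ ∫⁻ y in univ.pi fun _ => Ico (0 : ℝ) 1, ENNReal.ofReal (4 * G) *
          ({t | insertCoord i t y ∈ {x ∈ Qcube (m + 1) | φ x = c}}.encard : ℝ≥0∞) :=
        (enorm_integral_le_lintegral_enorm _).trans <| setLIntegral_mono'
          (.univ_pi fun _ => measurableSet_Ico) hslice
    _ ≤ ENNReal.ofReal (4 * G) * ∫⁻ y,
          ({t | insertCoord i t y ∈ {x ∈ Qcube (m + 1) | φ x = c}}.encard : ℝ≥0∞) := by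
        rw [lintegral_const_mul' _ _ ENNReal.ofReal_ne_top]
        gcongr
        exact Measure.restrict_le_self
    _ ≤ ENNReal.ofReal (4 * G) * μH[m] {x ∈ Qcube (m + 1) | φ x = c} := by
        gcongr
        exact lintegral_encard_insertCoord_mem_le i _

end Superlevel

section IntegrationByParts

variable {n : ℕ} {F : Type*} [NormedAddCommGroup F] [NormedSpace ℝ F] {i : Fin n}

lemma partialDeriv_smul {u : 𝔼 n → ℝ} {v : 𝔼 n → F} (hu : Differentiable ℝ u)
    (hv : Differentiable ℝ v) (i : Fin n) (x : 𝔼 n) :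
    partialDeriv i (fun x => u x • v x) x =
      u x • partialDeriv i v x + partialDeriv i u x • v x := by
  simp [partialDeriv, fderiv_fun_smul (hu x) (hv x)]

lemma setIntegral_smul_partialDeriv [CompleteSpace F] {u : 𝔼 n → ℝ} {v : 𝔼 n → F}
    (hu : ContDiff ℝ 1 u) (hv : ContDiff ℝ 1 v)
    (hu_per : Function.Periodic u (EuclideanSpace.single i 1))
    (hv_per : Function.Periodic v (EuclideanSpace.single i 1)) :
    ∫ x in Qcube n, u x • partialDeriv i v x = -∫ x in Qcube n, partialDeriv i u x • v x := by
  obtain _ | m := n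
  · exact i.elim0
  have huv : IntegrableOn (fun x => u x • partialDeriv i v x) (Qcube (m + 1)) :=
    integrableOn_Qcube (hu.continuous.smul (continuous_partialDeriv hv i))
  have hvu : IntegrableOn (fun x => partialDeriv i u x • v x) (Qcube (m + 1)) :=
    integrableOn_Qcube ((continuous_partialDeriv hu i).smul hv.continuous)
  have hprod : ContDiff ℝ 1 fun x => u x • v x := hu.smul hv
  have hprod_per : Function.Periodic (fun x => u x • v x) (EuclideanSpace.single i 1) :=
    fun x => by simp only [hu_per x, hv_per x]
  rw [← add_eq_zero_iff_eq_neg, ← integral_add huv hvu,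
    ← setIntegral_partialDeriv_eq_zero hprod hprod_per]
  simp only [partialDeriv_smul (hu.differentiable one_ne_zero) (hv.differentiable one_ne_zero)]

end IntegrationByParts

section Periodic

variable {n : ℕ} {φ : 𝔼 n → ℝ}

lemma ZPeriodic.periodic_single (hφ : ZPeriodic φ) (i : Fin n) :
    Function.Periodic φ (EuclideanSpace.single i 1) := fun x => by
  convert! hφ x (Pi.single i 1) using 3
  ext j
  simp [Pi.single_apply]

lemma ZPeriodic.partialDeriv (hφ : ZPeriodic φ) (i : Fin n) :
    ZPeriodic (partialDeriv i φ) := fun x k => by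
  rw [_root_.partialDeriv, ← fderiv_comp_add_right, funext fun y => hφ y k]
  rfl

lemma ZPeriodic.neg (hφ : ZPeriodic φ) : ZPeriodic fun x => -φ x :=
  fun x k => congrArg Neg.neg (hφ x k)

lemma contDiff_partialDeriv (hφ : ContDiff ℝ 2 φ) (i : Fin n) : ContDiff ℝ 1 (partialDeriv i φ) :=
  (hφ.fderiv_right one_add_one_eq_two.le).clm_apply contDiff_const

lemma lap_eq_sum_partialDeriv (φ : 𝔼 n → ℝ) (x : 𝔼 n) :
    lap φ x = ∑ i, partialDeriv i (partialDeriv i φ) x := rfl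

lemma sum_setIntegral_sq_partialDeriv {lam : ℝ} (hφ : ContDiff ℝ 2 φ) (hper : ZPeriodic φ)
    (hlap : ∀ x, lap φ x = -lam ^ 2 * φ x) :
    ∑ i, ∫ x in Qcube n, partialDeriv i φ x ^ 2 = lam ^ 2 * ∫ x in Qcube n, φ x ^ 2 := by
  have hφ1 : ContDiff ℝ 1 φ := hφ.of_le one_le_two
  have hparts : ∀ i, ∫ x in Qcube n, partialDeriv i φ x ^ 2 =
      -∫ x in Qcube n, φ x * partialDeriv i (partialDeriv i φ) x := fun i => by
    have h := setIntegral_smul_partialDeriv (i := i) hφ1 (contDiff_partialDeriv hφ i)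
      (hper.periodic_single i) ((hper.partialDeriv i).periodic_single i)
    simp only [smul_eq_mul] at h
    simp only [h, neg_neg, sq]
  have hint : ∀ i, IntegrableOn (fun x => φ x * partialDeriv i (partialDeriv i φ) x) (Qcube n) :=
    fun i => integrableOn_Qcube
      (hφ.continuous.mul (continuous_partialDeriv (contDiff_partialDeriv hφ i) i))
  calc ∑ i, ∫ x in Qcube n, partialDeriv i φ x ^ 2
      = -∫ x in Qcube n, φ x * lap φ x := by
        simp only [hparts, Finset.sum_neg_distrib, lap_eq_sum_partialDeriv, Finset.mul_sum]
        rw [integral_finsetSum _ fun i _ => hint i]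
    _ = lam ^ 2 * ∫ x in Qcube n, φ x ^ 2 := by
        rw [← integral_neg, ← integral_const_mul]
        simp only [hlap]
        congr with x
        ring

end Periodic

section Torus

local instance : MeasureSpace UnitAddCircle := ⟨AddCircle.haarAddCircle⟩

local instance : IsProbabilityMeasure (volume : Measure UnitAddCircle) :=
  inferInstanceAs (IsProbabilityMeasure AddCircle.haarAddCircle)

open UnitAddTorus

lemma sq_norm_apply_le_card_mul_integral {d : Type*} [Fintype d] (f : C(UnitAddTorus d, ℂ))
    {S : Finset (d → ℤ)} (hS : ∀ k ∉ S, mFourierCoeff f k = 0) (t : UnitAddTorus d) :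
    ‖f t‖ ^ 2 ≤ S.card * ∫ s, ‖f s‖ ^ 2 := by
  have hsum : ∑ k ∈ S, mFourierCoeff f k • mFourier k t = f t :=
    (hasSum_sum_of_ne_finset_zero fun k hk => by rw [hS k hk, zero_smul]).unique
      (hasSum_mFourier_series_apply_of_summable (summable_of_ne_finset_zero hS) t)
  have hparseval : ∑ k ∈ S, ‖mFourierCoeff f k‖ ^ 2 = ∫ s, ‖f s‖ ^ 2 := by
    have h := hasSum_sq_mFourierCoeff (f.toLp 2 volume ℂ)
    simp only [mFourierCoeff_toLp] at h
    rw [(hasSum_sum_of_ne_finset_zero fun k hk => by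
      rw [hS k hk, norm_zero, sq, mul_zero]).unique h]
    refine integral_congr_ae ?_
    filter_upwards [f.coeFn_toLp (p := 2) (𝕜 := ℂ) volume] with s hs
    rw [hs]
  have hwave : ∀ k, ‖mFourier k t‖ ≤ 1 := fun k =>
    ((mFourier k).norm_coe_le_norm t).trans_eq mFourier_norm
  calc ‖f t‖ ^ 2
      ≤ (∑ k ∈ S, ‖mFourierCoeff f k‖) ^ 2 := by
        rw [← hsum]
        gcongr
        refine norm_sum_le_of_le _ fun k _ => ?_
        rw [norm_smul]
        exact mul_le_of_le_one_right (norm_nonneg _) (hwave k)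
    _ ≤ S.card * ∑ k ∈ S, ‖mFourierCoeff f k‖ ^ 2 := sq_sum_le_card_mul_sum_sq
    _ = S.card * ∫ s, ‖f s‖ ^ 2 := by rw [hparseval]

variable {n : ℕ}

/-- The projection `ℝⁿ → ℝⁿ/ℤⁿ`, which relates periodic functions to Fourier series on the torus. -/
def toTorus (x : 𝔼 n) : UnitAddTorus (Fin n) := fun i => (x i : UnitAddCircle)

lemma isOpenQuotientMap_toTorus : IsOpenQuotientMap (toTorus (n := n)) :=
  (IsOpenQuotientMap.piMap fun _ => QuotientAddGroup.isOpenQuotientMap_mk).comp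
    (EuclideanSpace.equiv (Fin n) ℝ).toHomeomorph.isOpenQuotientMap

lemma ZPeriodic.apply_eq_of_toTorus_eq {φ : 𝔼 n → ℝ} (hφ : ZPeriodic φ) {x y : 𝔼 n}
    (h : toTorus x = toTorus y) : φ x = φ y := by
  have hcoord : ∀ i, ∃ k : ℤ, x i = y i + k := fun i => by
    have hi : (x i : UnitAddCircle) = y i := congrFun h i
    rw [← sub_eq_zero, ← AddCircle.coe_sub, AddCircle.coe_eq_zero_iff] at hi
    obtain ⟨k, hk⟩ := hi
    exact ⟨k, by rw [zsmul_one] at hk; rw [hk, add_sub_cancel]⟩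
  choose k hk using hcoord
  rw [← hφ y k]
  congr 1
  ext i
  simp [hk i]

lemma ZPeriodic.exists_continuousMap_torus {φ : 𝔼 n → ℝ} (hφ : ZPeriodic φ)
    (hcont : Continuous φ) : ∃ f : C(UnitAddTorus (Fin n), ℂ), ∀ x, f (toTorus x) = φ x := by
  let φ' : C(𝔼 n, ℂ) := ⟨fun x => φ x, Complex.continuous_ofReal.comp hcont⟩
  have hfactors : Function.FactorsThrough φ' toTorus := fun x y h =>
    congrArg Complex.ofReal (hφ.apply_eq_of_toTorus_eq h)
  let π' : C(𝔼 n, UnitAddTorus (Fin n)) := ⟨toTorus, isOpenQuotientMap_toTorus.continuous⟩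
  have hq : Topology.IsQuotientMap π' := isOpenQuotientMap_toTorus.isQuotientMap
  exact ⟨hq.lift φ' hfactors, DFunLike.congr_fun (hq.lift_comp φ' hfactors)⟩

lemma integral_torus_eq_setIntegral_Qcube {E : Type*} [NormedAddCommGroup E] [NormedSpace ℝ E]
    (f : UnitAddTorus (Fin n) → E) : ∫ t, f t = ∫ x in Qcube n, f (toTorus x) := by
  have hIoc : {y : Fin n → ℝ | ∀ i, y i ∈ Ioc ((0 : Fin n → ℝ) i) ((0 : Fin n → ℝ) i + 1)} =
      univ.pi fun i => Ioc ((0 : Fin n → ℝ) i) ((1 : Fin n → ℝ) i) := by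
    ext; simp
  have hIco : (univ.pi fun i => Ioc ((0 : Fin n → ℝ) i) ((1 : Fin n → ℝ) i)) =ᵐ[volume]
      univ.pi fun _ : Fin n => Ico (0 : ℝ) 1 :=
    Measure.univ_pi_Ioc_ae_eq_Icc.trans (Measure.univ_pi_Ico_ae_eq_Icc (f := 0) (g := 1)).symm
  rw [integral_preimage f 0, hIoc, setIntegral_congr_set hIco, ← toLp_preimage_Qcube]
  exact (PiLp.volume_preserving_toLp (Fin n)).setIntegral_preimage_emb
    (MeasurableEquiv.toLp 2 _).measurableEmbedding (fun x => f (toTorus x)) (Qcube n)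

end Torus

section Fourier

open UnitAddTorus Complex

variable {n : ℕ} {φ : 𝔼 n → ℝ} {k : Fin n → ℤ}

/-- The character `x ↦ exp (2πi ⟨k, x⟩)` of `ℝⁿ`, as the pullback of a monomial on the torus. -/
def planeWave (k : Fin n → ℤ) (x : 𝔼 n) : ℂ := mFourier k (toTorus x)

lemma planeWave_eq_exp (k : Fin n → ℤ) (x : 𝔼 n) :
    planeWave k x = cexp (2 * π * I * ∑ j, (k j : ℂ) * x j) := by
  simp only [planeWave, mFourier, ContinuousMap.coe_mk, toTorus, fourier_coe_apply,
    ← Complex.exp_sum, Finset.mul_sum]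
  congr! 2
  push_cast
  ring

lemma contDiff_planeWave : ContDiff ℝ 1 (planeWave k) := by
  rw [funext (planeWave_eq_exp k)]
  have hcoord : ∀ j, ContDiff ℝ 1 fun x : 𝔼 n => (x j : ℂ) := fun j =>
    (ofRealCLM.comp (EuclideanSpace.proj j : 𝔼 n →L[ℝ] ℝ)).contDiff
  fun_prop

lemma periodic_planeWave (k : Fin n → ℤ) (i : Fin n) :
    Function.Periodic (planeWave k) (EuclideanSpace.single i 1) := fun x => by
  refine congrArg (mFourier k) (funext fun j => ?_)
  obtain rfl | hj := eq_or_ne j i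
  · simp [toTorus]
  · simp [toTorus, hj]

lemma partialDeriv_planeWave (i : Fin n) (x : 𝔼 n) :
    partialDeriv i (planeWave k) x = 2 * π * I * k i * planeWave k x := by
  have hphase : HasFDerivAt (fun x : 𝔼 n => 2 * π * I * ∑ j, (k j : ℂ) * x j)
      ((2 * π * I : ℂ) • ∑ j, (k j : ℂ) • ofRealCLM.comp (EuclideanSpace.proj j : 𝔼 n →L[ℝ] ℝ))
      x :=
    (HasFDerivAt.fun_sum fun j _ =>
      (ofRealCLM.comp (EuclideanSpace.proj j : 𝔼 n →L[ℝ] ℝ)).hasFDerivAt.const_mul _).const_mul _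
  rw [partialDeriv, funext (planeWave_eq_exp k), hphase.cexp.fderiv]
  simp only [smul_apply, sum_apply, ContinuousLinearMap.comp_apply, PiLp.proj_apply,
    PiLp.single_apply, ofRealCLM_apply, apply_ite ofReal, ofReal_one, ofReal_zero, smul_eq_mul,
    mul_ite, mul_one, mul_zero, Finset.sum_ite_eq', Finset.mem_univ, ↓reduceIte]
  ring

/-- The `k`-th Fourier coefficient of a function on the torus, as an integral over `Q`, where one
can integrate by parts. -/
def cubeFourierCoeff (ψ : 𝔼 n → ℝ) (k : Fin n → ℤ) : ℂ :=
  ∫ x in Qcube n, ψ x • planeWave (-k) x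

lemma cubeFourierCoeff_partialDeriv (hφ : ContDiff ℝ 1 φ) (hper : ZPeriodic φ) (i : Fin n)
    (k : Fin n → ℤ) :
    cubeFourierCoeff (partialDeriv i φ) k = 2 * π * I * k i * cubeFourierCoeff φ k := by
  have h := setIntegral_smul_partialDeriv hφ contDiff_planeWave (hper.periodic_single i)
    (periodic_planeWave (-k) i)
  rw [cubeFourierCoeff, ← neg_eq_iff_eq_neg.mpr h, cubeFourierCoeff, ← integral_const_mul,
    ← integral_neg]
  congr with x
  simp only [partialDeriv_planeWave, Pi.neg_apply, Int.cast_neg, mul_neg, neg_mul, smul_neg,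
    real_smul, neg_neg]
  ring

lemma cubeFourierCoeff_lap (hφ : ContDiff ℝ 2 φ) (hper : ZPeriodic φ) (k : Fin n → ℤ) :
    cubeFourierCoeff (lap φ) k = -(2 * π) ^ 2 * (∑ i, k i ^ 2 : ℤ) * cubeFourierCoeff φ k := by
  have hint : ∀ i, IntegrableOn
      (fun x => partialDeriv i (partialDeriv i φ) x • planeWave (-k) x) (Qcube n) := fun i =>
    integrableOn_Qcube ((continuous_partialDeriv (contDiff_partialDeriv hφ i) i).smul
      contDiff_planeWave.continuous)
  calc cubeFourierCoeff (lap φ) k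
      = ∑ i, cubeFourierCoeff (partialDeriv i (partialDeriv i φ)) k := by
        simp only [cubeFourierCoeff, lap_eq_sum_partialDeriv, Finset.sum_smul]
        exact integral_finsetSum _ fun i _ => hint i
    _ = _ := by
        simp only [cubeFourierCoeff_partialDeriv (contDiff_partialDeriv hφ _)
          (hper.partialDeriv _), cubeFourierCoeff_partialDeriv (hφ.of_le one_le_two) hper]
        push_cast
        rw [Finset.mul_sum, Finset.sum_mul]
        refine Finset.sum_congr rfl fun i _ => ?_
        linear_combination (2 * π * k i) ^ 2 * cubeFourierCoeff φ k * I_sq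

lemma cubeFourierCoeff_eq_zero_of_lap_eq {lam : ℝ} (hφ : ContDiff ℝ 2 φ) (hper : ZPeriodic φ)
    (hlap : ∀ x, lap φ x = -lam ^ 2 * φ x)
    (hk : (2 * π) ^ 2 * ((∑ i, k i ^ 2 : ℤ) : ℝ) ≠ lam ^ 2) : cubeFourierCoeff φ k = 0 := by
  have hscale : cubeFourierCoeff (lap φ) k = -lam ^ 2 * cubeFourierCoeff φ k := by
    simp only [cubeFourierCoeff, hlap, mul_smul, integral_smul]
    rw [real_smul, ofReal_neg, ofReal_pow]
  have hdiff : (((2 * π) ^ 2 * ((∑ i, k i ^ 2 : ℤ) : ℝ) - lam ^ 2 : ℝ) : ℂ) *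
      cubeFourierCoeff φ k = 0 := by
    rw [cubeFourierCoeff_lap hφ hper] at hscale
    push_cast at hscale ⊢
    linear_combination -hscale
  exact (mul_eq_zero.mp hdiff).resolve_left (ofReal_ne_zero.mpr (sub_ne_zero.mpr hk))

lemma sq_apply_le_card_mul_setIntegral (hφ : Continuous φ) (hper : ZPeriodic φ)
    {S : Finset (Fin n → ℤ)} (hS : ∀ k ∉ S, cubeFourierCoeff φ k = 0) (x : 𝔼 n) :
    φ x ^ 2 ≤ S.card * ∫ y in Qcube n, φ y ^ 2 := by
  obtain ⟨f, hf⟩ := hper.exists_continuousMap_torus hφ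
  have hcoeff : ∀ k ∉ S, mFourierCoeff f k = 0 := fun k hk => by
    rw [mFourierCoeff, integral_torus_eq_setIntegral_Qcube, ← hS k hk, cubeFourierCoeff]
    congr with y
    rw [hf, planeWave, real_smul, smul_eq_mul, mul_comm]
  have h := sq_norm_apply_le_card_mul_integral f hcoeff (toTorus x)
  simpa only [integral_torus_eq_setIntegral_Qcube, hf, norm_real, norm_eq_abs, sq_abs] using h

end Fourier

section Lattice

variable {m n : ℕ} {lam : ℝ}

lemma card_le_of_forall_sum_sq_eq {S : Finset (Fin (m + 1) → ℤ)} {M : ℕ} {N : ℤ}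
    (hM : ∀ k ∈ S, ∀ i, |k i| ≤ M) (hN : ∀ k ∈ S, ∑ i, k i ^ 2 = N) :
    S.card ≤ 2 * (2 * M + 1) ^ m := by
  -- The coordinates after the first determine the first one up to sign.
  let T : Finset (Bool × (Fin m → ℤ)) :=
    Finset.univ ×ˢ Fintype.piFinset fun _ => Finset.Icc (-M : ℤ) M
  have hT : T.card = 2 * (2 * M + 1) ^ m := by
    have hside : (Finset.Icc (-M : ℤ) M).card = 2 * M + 1 := by rw [Int.card_Icc]; omega
    simp [T, Fintype.card_piFinset, hside]
  rw [← hT]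
  refine Finset.card_le_card_of_injOn (fun k => (decide (0 ≤ k 0), Fin.tail k)) ?_ ?_
  · intro k hk
    simp only [T, Finset.coe_product, Finset.coe_univ, mem_prod, mem_univ, true_and,
      Finset.mem_coe, Fintype.mem_piFinset, Finset.mem_Icc, ← abs_le]
    exact fun i => hM k hk i.succ
  · intro k hk l hl h
    obtain ⟨hsign, htail⟩ : (0 ≤ k 0 ↔ 0 ≤ l 0) ∧ Fin.tail k = Fin.tail l := by simpa using h
    have hsucc : ∀ i : Fin m, k i.succ = l i.succ := congrFun htail
    have hsq : k 0 ^ 2 = l 0 ^ 2 := by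
      have hsum := (hN k hk).trans (hN l hl).symm
      simpa only [Fin.sum_univ_succ, hsucc, add_left_inj] using hsum
    have hzero : k 0 = l 0 := by
      rcases sq_eq_sq_iff_eq_or_eq_neg.mp hsq with h | h <;> omega
    exact funext <| Fin.cases hzero hsucc

/-- The frequencies `k` of the plane waves with `Δ exp (2πi ⟨k, x⟩) = -λ² exp (2πi ⟨k, x⟩)`. -/
def eigenFrequencies (n : ℕ) (lam : ℝ) : Set (Fin n → ℤ) :=
  {k | (2 * π) ^ 2 * ((∑ i, k i ^ 2 : ℤ) : ℝ) = lam ^ 2}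

lemma abs_le_floor_of_mem_eigenFrequencies (hlam : 0 ≤ lam) {k : Fin n → ℤ}
    (hk : k ∈ eigenFrequencies n lam) (i : Fin n) : |k i| ≤ ⌊lam / (2 * π)⌋₊ := by
  have hcoord : k i ^ 2 ≤ ∑ j, k j ^ 2 :=
    Finset.single_le_sum (fun j _ => sq_nonneg (k j)) (Finset.mem_univ i)
  have hsq : (2 * π * |(k i : ℝ)|) ^ 2 ≤ lam ^ 2 := by
    rw [← hk.out, mul_pow, sq_abs]
    gcongr
    exact_mod_cast hcoord
  have habs : (((k i).natAbs : ℕ) : ℝ) ≤ lam / (2 * π) := by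
    rw [Nat.cast_natAbs, Int.cast_abs, le_div_iff₀' two_pi_pos]
    exact le_of_sq_le_sq hsq hlam
  rw [Int.abs_eq_natAbs]
  exact_mod_cast Nat.le_floor habs

lemma finite_eigenFrequencies (hlam : 0 ≤ lam) : (eigenFrequencies n lam).Finite := by
  refine (Set.finite_Icc (fun _ => -(⌊lam / (2 * π)⌋₊ : ℤ)) fun _ => ⌊lam / (2 * π)⌋₊).subset
    fun k hk => ?_
  have habs := fun i => abs_le.mp (abs_le_floor_of_mem_eigenFrequencies hlam hk i)
  exact ⟨fun i => (habs i).1, fun i => (habs i).2⟩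

lemma ncard_eigenFrequencies_le (hlam : 0 < lam) :
    ((eigenFrequencies (m + 1) lam).ncard : ℝ) ≤ 2 * lam ^ m := by
  obtain hempty | ⟨k, hk⟩ := (eigenFrequencies (m + 1) lam).eq_empty_or_nonempty
  · rw [hempty, Set.ncard_empty, Nat.cast_zero]
    positivity
  set M := ⌊lam / (2 * π)⌋₊
  obtain ⟨i, hi⟩ : ∃ i, k i ≠ 0 := by
    by_contra! hzero
    have hlam_sq : lam ^ 2 = 0 := by simpa [hzero] using hk.out.symm
    exact hlam.ne' (pow_eq_zero_iff two_ne_zero |>.mp hlam_sq)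
  have hM : 1 ≤ M := by
    have h := (Int.one_le_abs hi).trans (abs_le_floor_of_mem_eigenFrequencies hlam.le hk i)
    exact_mod_cast h
  have hMlam : 2 * π * M ≤ lam :=
    (le_div_iff₀' two_pi_pos).mp (Nat.floor_le (by positivity))
  have hside : ((2 * M + 1 : ℕ) : ℝ) ≤ lam := by
    have hM' : (1 : ℝ) ≤ M := mod_cast hM
    push_cast
    nlinarith [pi_gt_three]
  have hcard : (eigenFrequencies (m + 1) lam).ncard ≤ 2 * (2 * M + 1) ^ m := by
    have hfin := finite_eigenFrequencies (n := m + 1) hlam.le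
    rw [Set.ncard_eq_toFinset_card _ hfin]
    refine card_le_of_forall_sum_sq_eq (N := ∑ i, k i ^ 2)
      (fun l hl => abs_le_floor_of_mem_eigenFrequencies hlam.le (hfin.mem_toFinset.mp hl))
      fun l hl => ?_
    have h := (hfin.mem_toFinset.mp hl).out.trans hk.out.symm
    exact_mod_cast mul_left_cancel₀ (pow_ne_zero 2 two_pi_pos.ne') h
  calc ((eigenFrequencies (m + 1) lam).ncard : ℝ)
      ≤ 2 * ((2 * M + 1 : ℕ) : ℝ) ^ m := mod_cast hcard
    _ ≤ 2 * lam ^ m := by gcongr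

end Lattice

section Eigenfunction

variable {m n : ℕ} {lam : ℝ} {φ : 𝔼 n → ℝ}

lemma sq_partialDeriv_le {φ : 𝔼 (m + 1) → ℝ} (hlam : 0 < lam) (hφ : ContDiff ℝ 2 φ)
    (hper : ZPeriodic φ) (hlap : ∀ x, lap φ x = -lam ^ 2 * φ x) (i : Fin (m + 1))
    (x : 𝔼 (m + 1)) :
    partialDeriv i φ x ^ 2 ≤ 2 * lam ^ (m + 2) * ∫ y in Qcube (m + 1), φ y ^ 2 := by
  have hφ1 : ContDiff ℝ 1 φ := hφ.of_le one_le_two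
  have hfin := finite_eigenFrequencies (n := m + 1) hlam.le
  have hcoeff : ∀ k ∉ hfin.toFinset, cubeFourierCoeff (partialDeriv i φ) k = 0 := fun k hk => by
    rw [cubeFourierCoeff_partialDeriv hφ1 hper, cubeFourierCoeff_eq_zero_of_lap_eq hφ hper hlap
      (mt hfin.mem_toFinset.mpr hk), mul_zero]
  have henergy : ∫ y in Qcube (m + 1), partialDeriv i φ y ^ 2 ≤
      lam ^ 2 * ∫ y in Qcube (m + 1), φ y ^ 2 := by
    rw [← sum_setIntegral_sq_partialDeriv hφ hper hlap]
    exact Finset.single_le_sum (f := fun j => ∫ y in Qcube (m + 1), partialDeriv j φ y ^ 2)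
      (fun j _ => integral_nonneg fun y => sq_nonneg _) (Finset.mem_univ i)
  calc partialDeriv i φ x ^ 2
      ≤ hfin.toFinset.card * ∫ y in Qcube (m + 1), partialDeriv i φ y ^ 2 :=
        sq_apply_le_card_mul_setIntegral (continuous_partialDeriv hφ1 i) (hper.partialDeriv i)
          hcoeff x
    _ ≤ 2 * lam ^ m * (lam ^ 2 * ∫ y in Qcube (m + 1), φ y ^ 2) := by
        have hcard := ncard_eigenFrequencies_le (m := m) hlam
        rw [Set.ncard_eq_toFinset_card _ hfin] at hcard
        gcongr
    _ = 2 * lam ^ (m + 2) * ∫ y in Qcube (m + 1), φ y ^ 2 := by ring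

lemma ofReal_setIntegral_superlevel_le {φ : 𝔼 (m + 1) → ℝ} {G : ℝ} (hφ : ContDiff ℝ 2 φ)
    (hper : ZPeriodic φ) (hlap : ∀ x, lap φ x = -lam ^ 2 * φ x) (hG0 : 0 < G)
    (hG : ∀ i x, |partialDeriv i φ x| ≤ G) (c : ℝ) :
    ENNReal.ofReal (lam ^ 2 / (4 * (m + 1) * G) * ∫ x in {x ∈ Qcube (m + 1) | c ≤ φ x}, φ x) ≤
      μH[m] {x ∈ Qcube (m + 1) | φ x = c} := by
  have hint : ∀ i, IntegrableOn (partialDeriv i (partialDeriv i φ))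
      {x ∈ Qcube (m + 1) | c ≤ φ x} := fun i =>
    (integrableOn_Qcube (continuous_partialDeriv (contDiff_partialDeriv hφ i) i)).mono_set
      (sep_subset _ _)
  have hdiv : lam ^ 2 * ∫ x in {x ∈ Qcube (m + 1) | c ≤ φ x}, φ x =
      -∑ i, ∫ x in {x ∈ Qcube (m + 1) | c ≤ φ x}, partialDeriv i (partialDeriv i φ) x := by
    rw [← integral_finsetSum _ fun i _ => hint i, ← integral_const_mul, ← integral_neg]
    simp only [← lap_eq_sum_partialDeriv, hlap, neg_mul, neg_neg]
  have hbound : ENNReal.ofReal (lam ^ 2 * ∫ x in {x ∈ Qcube (m + 1) | c ≤ φ x}, φ x) ≤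
      ENNReal.ofReal (4 * (m + 1) * G) * μH[m] {x ∈ Qcube (m + 1) | φ x = c} := by
    calc ENNReal.ofReal (lam ^ 2 * ∫ x in {x ∈ Qcube (m + 1) | c ≤ φ x}, φ x)
        ≤ ‖∑ i, ∫ x in {x ∈ Qcube (m + 1) | c ≤ φ x}, partialDeriv i (partialDeriv i φ) x‖ₑ := by
          rw [hdiv, ← enorm_neg, ← ofReal_norm]
          exact ENNReal.ofReal_le_ofReal (le_norm_self _)
      _ ≤ ∑ _i : Fin (m + 1),
            ENNReal.ofReal (4 * G) * μH[m] {x ∈ Qcube (m + 1) | φ x = c} :=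
          (enorm_sum_le _ _).trans <| Finset.sum_le_sum fun i _ =>
            enorm_setIntegral_partialDeriv_superlevel_le hφ.continuous (contDiff_partialDeriv hφ i)
              ((hper.partialDeriv i).periodic_single i) hG0 (hG i) c
      _ = ENNReal.ofReal (4 * (m + 1) * G) * μH[m] {x ∈ Qcube (m + 1) | φ x = c} := by
          rw [Finset.sum_const, Finset.card_univ, Fintype.card_fin, nsmul_eq_mul, ← mul_assoc,
            ← ENNReal.ofReal_natCast, ← ENNReal.ofReal_mul (Nat.cast_nonneg _)]
          congr 2
          push_cast
          ring
  have hK : 0 < 4 * (m + 1) * G := by positivity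
  rw [div_mul_eq_mul_div, ENNReal.ofReal_div_of_pos hK]
  exact ENNReal.div_le_of_le_mul' hbound

lemma setIntegral_abs_superlevel (hφ : Continuous φ) {c : ℝ} (hc : 0 ≤ c) :
    ∫ x in {x ∈ Qcube n | c ≤ |φ x|}, |φ x| =
      (∫ x in {x ∈ Qcube n | c ≤ φ x}, φ x) + ∫ x in {x ∈ Qcube n | c ≤ -φ x}, -φ x := by
  have hind : ∀ {ψ : 𝔼 n → ℝ}, Continuous ψ → ∫ x in {x ∈ Qcube n | c ≤ ψ x}, ψ x =
      ∫ x in Qcube n, {x | c ≤ ψ x}.indicator ψ x := fun hψ =>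
    (setIntegral_indicator (isClosed_le continuous_const hψ).measurableSet).symm
  have hint : ∀ {ψ : 𝔼 n → ℝ}, Continuous ψ →
      IntegrableOn ({x | c ≤ ψ x}.indicator ψ) (Qcube n) := fun hψ =>
    (integrableOn_Qcube hψ).indicator (isClosed_le continuous_const hψ).measurableSet
  have hneg : Continuous fun x => -φ x := hφ.neg
  rw [hind hφ.abs, hind hφ, hind hneg, ← integral_add (hint hφ) (hint hneg)]
  congr with x
  simp only [indicator_apply, mem_ofPred_eq]
  obtain ⟨habs, hsign⟩ | ⟨habs, hsign⟩ := abs_cases (φ x) <;> split_ifs <;> linarith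

lemma lap_neg (φ : 𝔼 n → ℝ) (x : 𝔼 n) : lap (fun y => -φ y) x = -lap φ x := by
  simp [lap, fderiv_fun_neg, Finset.sum_neg_distrib]

lemma partialDeriv_neg (i : Fin n) (φ : 𝔼 n → ℝ) (x : 𝔼 n) :
    partialDeriv i (fun y => -φ y) x = -partialDeriv i φ x := by
  simp [partialDeriv, fderiv_fun_neg]

lemma sq_div_mul_sqrt_eq_mul_rpow (hlam : 0 < lam) (K : ℝ) :
    lam ^ 2 / (K * √(2 * lam ^ (m + 2))) =
      1 / (K * √2) * lam ^ (((3 : ℝ) - ((m + 1 : ℕ) : ℝ)) / 2) := by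
  have hexp : lam ^ (((3 : ℝ) - ((m + 1 : ℕ) : ℝ)) / 2) = lam ^ 2 / √(lam ^ (m + 2)) := by
    rw [sqrt_eq_rpow, ← rpow_natCast lam (m + 2), ← rpow_mul hlam.le, ← rpow_natCast lam 2,
      ← rpow_sub hlam]
    congr 1
    push_cast
    ring
  rw [hexp, sqrt_mul zero_le_two, div_mul_div_comm, one_mul, mul_assoc]

theorem level_set_measure_lower_bound_general (hn : 1 ≤ n) (hlam : 0 < lam) (hφ : ContDiff ℝ 2 φ)
    (hper : ZPeriodic φ) (hlap : ∀ x, lap φ x = -lam ^ 2 * φ x)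
    (hnorm : ∫ x in Qcube n, φ x ^ 2 = 1) {c : ℝ} (hc : 0 ≤ c) :
    ENNReal.ofReal (1 / (4 * n * √2) * lam ^ (((3 : ℝ) - n) / 2) *
        ∫ x in {x ∈ Qcube n | c ≤ |φ x|}, |φ x|) ≤
      μH[(n : ℝ) - 1] {x ∈ Qcube n | φ x = c} + μH[(n : ℝ) - 1] {x ∈ Qcube n | φ x = -c} := by
  obtain ⟨m, rfl⟩ : ∃ m, n = m + 1 := ⟨n - 1, by omega⟩
  have hgrad : ∀ i x, |partialDeriv i φ x| ≤ √(2 * lam ^ (m + 2)) := fun i x =>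
    abs_le_sqrt <| by simpa only [hnorm, mul_one] using sq_partialDeriv_le hlam hφ hper hlap i x
  have hG0 : 0 < √(2 * lam ^ (m + 2)) := by positivity
  have hpos := ofReal_setIntegral_superlevel_le hφ hper hlap hG0 hgrad c
  have hneg := ofReal_setIntegral_superlevel_le hφ.neg hper.neg
    (fun x => by rw [lap_neg, hlap, mul_neg]) hG0
    (fun i x => by rw [partialDeriv_neg, abs_neg]; exact hgrad i x) c
  simp only [neg_eq_iff_eq_neg] at hneg
  rw [← Nat.cast_add_one, sq_div_mul_sqrt_eq_mul_rpow hlam] at hpos hneg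
  rw [setIntegral_abs_superlevel hφ.continuous hc, mul_add, Nat.cast_add_one,
    add_sub_cancel_right, ← Nat.cast_add_one]
  exact ENNReal.ofReal_add_le.trans (add_le_add hpos hneg)

end Eigenfunction

theorem level_set_measure_lower_bound (n : ℕ) (hn : 2 ≤ n) :
    ∃ C : ℝ, 0 < C ∧
      ∀ (lam : ℝ), 0 < lam →
        ∀ (φ : EuclideanSpace ℝ (Fin n) → ℝ), ContDiff ℝ (⊤ : ℕ∞) φ → ZPeriodic φ →
          (∀ x, lap φ x = -lam ^ 2 * φ x) → (∫ x in Qcube n, (φ x) ^ 2) = 1 →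
          ∀ c : ℝ, 0 < c →
            μH[(n : ℝ) - 1] {x ∈ Qcube n | φ x = c} +
                μH[(n : ℝ) - 1] {x ∈ Qcube n | φ x = -c} ≥
              ENNReal.ofReal (C * lam ^ (((3 : ℝ) - (n : ℝ)) / 2) *
                ∫ x in {x ∈ Qcube n | c ≤ |φ x|}, |φ x|) := by
  have hn0 : 0 < n := zero_lt_two.trans_le hn
  exact ⟨1 / (4 * n * √2), by positivity, fun lam hlam φ hφ hper hlap hnorm c hc =>
    level_set_measure_lower_bound_general hn0 hlam (contDiff_infty.mp hφ 2) hper hlap hnorm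
      hc.le⟩
end
end
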